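/- arXiv:2109.02423 — 13 statements merged into one kernel-verified Lean document; each statement's English description precedes it below -/
import Mathlib

section
/- Let (I,d) be a totally bounded pseudo-metric space. Then for every δ > 0 there exists a finite, strongly stretched, δ-dense subset K of I. -/
/-!
Let `r = δ / 2` and let `K` be a set of maximal cardinality among those whose distinct points are
at distance *strictly* greater than `r`; total boundedness gives a finite `r / 2`-net, which bounds
these cardinalities, so `K` exists and is finite. By maximality every point of `I` is within `r`
of `K`. Hence the Hausdorff distance from `K` to `I` is at most `r`, which is strictly less than
every distance between distinct points of `K`, and `K` is `δ`-dense because `r < δ`.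
-/

/-- A totally bounded pseudo-metric space (total boundedness stated as:
for every `δ > 0` there is a finite `δ`-dense subset) has, for every `δ > 0`,
a finite, strongly stretched, `δ`-dense subset. -/
theorem stmt_0 {I : Type*} [PseudoMetricSpace I]
    (htb : ∀ δ : ℝ, 0 < δ → ∃ K : Finset I, ∀ x : I, ∃ k ∈ K, dist k x < δ) :
    ∀ δ : ℝ, 0 < δ → ∃ K : Finset I,
      (∀ x ∈ K, ∀ y ∈ K, x ≠ y →
        EMetric.hausdorffEdist (K : Set I) (Set.univ : Set I) < edist x y) ∧
      (∀ x : I, ∃ k ∈ K, dist k x < δ) := by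
  intro δ hδ
  lift δ to NNReal using hδ.le
  obtain ⟨F, hF⟩ := htb (δ / 4 : NNReal) (by push_cast; linarith)
  have hFcover : Metric.IsCover (δ / 4) Set.univ (F : Set I) := fun x _ ↦ by
    obtain ⟨k, hk, hkx⟩ := hF x
    refine ⟨k, hk, ?_⟩
    change edist x k ≤ (δ / 4 : NNReal)
    rw [edist_comm, edist_le_coe, ← NNReal.coe_le_coe, coe_nndist]
    exact hkx.le
  have hr : 2 * (δ / 4) = δ / 2 := by
    rw [← NNReal.coe_inj]
    push_cast
    ring
  have hpack : Metric.packingNumber (δ / 2) (Set.univ : Set I) ≠ ⊤ := by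
    rw [← hr]
    exact ((Metric.packingNumber_two_mul_le_externalCoveringNumber _ _).trans_lt
      (hFcover.externalCoveringNumber_le_encard.trans_lt F.finite_toSet.encard_lt_top)).ne
  obtain ⟨K, hK⟩ : ∃ K : Finset I,
      (K : Set I) = Metric.maximalSeparatedSet (δ / 2) (Set.univ : Set I) :=
    Set.Finite.exists_finset_coe (Set.encard_ne_top_iff.1
      (by rwa [Metric.encard_maximalSeparatedSet hpack]))
  have hcover : Metric.IsCover (δ / 2) Set.univ (K : Set I) :=
    hK ▸ Metric.isCover_maximalSeparatedSet hpack
  have hsep : Metric.IsSeparated (δ / 2 : NNReal) (K : Set I) :=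
    hK ▸ Metric.isSeparated_maximalSeparatedSet
  refine ⟨K, fun x hx y hy hxy ↦ lt_of_le_of_lt ?_ (hsep hx hy hxy), fun x ↦ ?_⟩
  · exact Metric.hausdorffEDist_le_of_mem_edist (fun z _ ↦ ⟨z, trivial, by simp⟩)
      fun z hz ↦ hcover hz
  · obtain ⟨k, hk, hkx⟩ := hcover (Set.mem_univ x)
    refine ⟨k, hk, ?_⟩
    change edist x k ≤ (δ / 2 : NNReal) at hkx
    rw [edist_le_coe, ← NNReal.coe_le_coe, coe_nndist, dist_comm] at hkx
    exact hkx.trans_lt (by exact_mod_cast half_lt_self hδ)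
end

section
/- Let I be a set, f : I → ℝ, and let 𝒦 be a regular mean. If the unordered average of f regarding 𝒦 exists (and is a real number), then there exists c ∈ ℝ such that {i ∈ I : f(i) ≠ c} is countable. -/
/-!
If `f` has unordered average `c`, then `f` tends to `c` along the cofinite filter, and a function
with this property differs from `c` only on the countable union of the finite sets
`{i | 1 / (n + 1) ≤ |f i - c|}`.

For the convergence (`UnorderedAvg.finite_setOf_le`), suppose `{i | ε ≤ |f i - c|}` is infinite, and let `I₀` be a finite set witnessing
the average up to `ε / 2`. By compactness of `EReal`, there are distinct indices outside `I₀`, all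
in that infinite set, along which `f` converges to some extended real `α`, and `α` lies outside
`(c - ε, c + ε)`. Listing `I₀` first and then these indices gives a sequence of values tending to
`α`, so its means tend to `α` by regularity. But these means are eventually means over
finite supersets of `I₀`, which lie within `ε / 2` of `c`, so `α ∈ [c - ε / 2, c + ε / 2]`.
-/

/-- A regular mean: a permutation-invariant real-valued mean of any (finite, nonempty)
number of real variables, satisfying conditions (a), (b), (c) of the paper.
Condition (b) is stated for limits `α ∈ ℝ ∪ {−∞, +∞}` via `EReal`. -/
structure RegularMean where
  K : List ℝ → ℝ
  perm_invariant : ∀ l l' : List ℝ, l.Perm l' → K l = K l'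
  tendsto_of_tendsto : ∀ (a : ℕ → ℝ) (α : EReal),
    Filter.Tendsto (fun n => (a n : EReal)) Filter.atTop (nhds α) →
    Filter.Tendsto (fun n => ((K (List.ofFn fun i : Fin (n + 1) => a i)) : EReal))
      Filter.atTop (nhds α)
  mem_of_mem_interval : ∀ (J : Set ℝ), J.OrdConnected → ∀ (l : List ℝ) (x : ℝ),
    l ≠ [] → K l ∈ J → x ∈ J → K (l ++ [x]) ∈ J

/-- The unordered average of `f : I → ℝ` regarding the mean `𝒦` equals `c`. -/
def UnorderedAvg {I : Type*} (𝒦 : RegularMean) (f : I → ℝ) (c : ℝ) : Prop :=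
  ∀ ε : ℝ, 0 < ε → ∃ I₀ : Finset I, ∀ I₁ : Finset I, I₀ ⊆ I₁ → I₁.Nonempty →
    |𝒦.K ((I₁.val.map f).toList) - c| < ε

/-- A finite set followed by an injective sequence avoiding it can be listed as a single injective
sequence. -/
lemma exists_injective_prepend {I : Type*} (I₀ : Finset I) (g : ℕ → I) (hg : g.Injective)
    (hg₀ : ∀ n, g n ∉ I₀) :
    ∃ h : ℕ → I, h.Injective ∧ (∀ n, h (n + I₀.card) = g n) ∧
      ∀ i ∈ I₀, ∃ n < I₀.card, h n = i := by
  let e := I₀.equivFin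
  refine ⟨fun n => if hn : n < I₀.card then (e.symm ⟨n, hn⟩ : I) else g (n - I₀.card), ?_, ?_, ?_⟩
  · intro a b hab
    by_cases ha : a < I₀.card <;> by_cases hb : b < I₀.card <;>
      simp only [ha, hb, dite_true, dite_false] at hab
    · simpa using hab
    · exact absurd (hab ▸ (e.symm ⟨a, ha⟩).2) (hg₀ _)
    · exact absurd (hab ▸ (e.symm ⟨b, hb⟩).2) (hg₀ _)
    · have := hg hab
      omega
  · intro n
    simp
  · intro i hi
    exact ⟨e ⟨i, hi⟩, (e ⟨i, hi⟩).2, by simp⟩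

/-- By permutation invariance, the mean over the image of an initial segment of `ℕ` may be computed in
the order of the enumeration, the form in which the limit property of the mean applies. -/
lemma RegularMean.K_map_range {I : Type*} (𝒦 : RegularMean) (f : I → ℝ) (h : ℕ ↪ I) (n : ℕ) :
    𝒦.K ((((Finset.range n).map h).val.map f).toList) =
      𝒦.K (List.ofFn fun i : Fin n => f (h i)) := by
  apply 𝒦.perm_invariant
  rw [← Multiset.coe_eq_coe, Multiset.coe_toList, Finset.map_val, Finset.range_val, Multiset.map_map,
    Multiset.range, Multiset.map_coe, List.ofFn_eq_map, ← List.map_coe_finRange_eq_range,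
    List.map_map]
  rfl

/-- `f` tends to its unordered average along the cofinite filter. -/
lemma UnorderedAvg.finite_setOf_le {I : Type*} {𝒦 : RegularMean} {f : I → ℝ} {c : ℝ}
    (hc : UnorderedAvg 𝒦 f c) {ε : ℝ} (hε : 0 < ε) : {i | ε ≤ |f i - c|}.Finite := by
  by_contra hinf
  obtain ⟨I₀, hI₀⟩ := hc (ε / 2) (half_pos hε)
  have hinf' : ({i | ε ≤ |f i - c|} \ (I₀ : Set I)).Infinite :=
    Set.Infinite.sdiff hinf I₀.finite_toSet
  let g := hinf'.natEmbedding
  obtain ⟨α, -, φ, hφ, hα⟩ :=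
    (isCompact_univ (X := EReal)).tendsto_subseq (x := fun n => (f (g n) : EReal)) fun _ => trivial
  have hα_far : α ∈ (Set.Ioo ((c - ε : ℝ) : EReal) ((c + ε : ℝ) : EReal))ᶜ := by
    refine isOpen_Ioo.isClosed_compl.mem_of_tendsto hα (Filter.Eventually.of_forall fun n => ?_)
    have h1 : ε ≤ |f (g (φ n)) - c| := (g (φ n)).2.1
    simp only [Function.comp, Set.mem_compl_iff, Set.mem_Ioo, EReal.coe_lt_coe_iff]
    rintro ⟨h2, h3⟩
    exact absurd (abs_lt.2 ⟨by linarith, by linarith⟩) (not_lt.2 h1)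
  obtain ⟨h, hinj, hg, hI⟩ := exists_injective_prepend I₀ (fun n => (g (φ n) : I))
    (fun a b hab => hφ.injective (g.injective (Subtype.ext hab))) fun n => (g (φ n)).2.2
  have hlim : Filter.Tendsto (fun n => (f (h n) : EReal)) Filter.atTop (nhds α) := by
    rw [← Filter.tendsto_add_atTop_iff_nat I₀.card]
    simpa only [hg] using! hα
  have hα_near : α ∈ Set.Icc ((c - ε / 2 : ℝ) : EReal) ((c + ε / 2 : ℝ) : EReal) := by
    refine isClosed_Icc.mem_of_tendsto (𝒦.tendsto_of_tendsto (fun n => f (h n)) α hlim) ?_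
    filter_upwards [Filter.eventually_ge_atTop I₀.card] with n hn
    have key := hI₀ ((Finset.range (n + 1)).map ⟨h, hinj⟩) (fun i hi => by
      obtain ⟨m, hm, rfl⟩ := hI i hi
      exact Finset.mem_map.2 ⟨m, Finset.mem_range.2 (by omega), rfl⟩) (by simp)
    rw [𝒦.K_map_range] at key
    have key' := abs_lt.1 key
    simp only [Function.Embedding.coeFn_mk] at key'
    exact ⟨EReal.coe_le_coe_iff.2 (by linarith), EReal.coe_le_coe_iff.2 (by linarith)⟩
  exact hα_far ⟨(EReal.coe_lt_coe_iff.2 (by linarith)).trans_le hα_near.1,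
    hα_near.2.trans_lt (EReal.coe_lt_coe_iff.2 (by linarith))⟩

/-- If the unordered average of `f` regarding a regular mean exists,
then `f` equals some constant `c` except on a countable set. -/
theorem stmt_3 {I : Type*} (𝒦 : RegularMean) (f : I → ℝ)
    (h : ∃ c : ℝ, UnorderedAvg 𝒦 f c) :
    ∃ c : ℝ, {i : I | f i ≠ c}.Countable := by
  obtain ⟨c, hc⟩ := h
  refine ⟨c, (Set.countable_iUnion fun n : ℕ =>
    (hc.finite_setOf_le (Nat.one_div_pos_of_nat (α := ℝ) (n := n))).countable).mono fun i hi => ?_⟩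
  obtain ⟨n, hn⟩ := exists_nat_one_div_lt (abs_pos.2 (sub_ne_zero.2 hi))
  exact Set.mem_iUnion.2 ⟨n, hn.le⟩
end

section
/- Let Σ_{i=1}^∞ a_i be an absolutely convergent series of real numbers. Let I = {1/n : n ∈ ℕ} ⊆ ℝ with the usual metric, and for finite H ⊆ I let s(H) = Σ_{h ∈ H} a_{1/h}. Then Σ_{i=1}^∞ a_i = c ∈ ℝ if and only if ext(s,I) = c. -/
/-!
The points of `I = {1/n}` are isolated, so a finite `K ⊆ I` that is sufficiently close to `I` in
the Hausdorff distance contains any prescribed finite subset of `I` (`exists_delta_subset`).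
Hence a sum of the series, being the unconditional limit of the sums over finite sets that contain
a given one, is also their limit as `K → I` in the Hausdorff distance (`extEq_of_hasSum`). Conversely, `I` is totally bounded, so
finite sets arbitrarily close to `I` exist (`exists_finset_close`) and the value of the extension
is unique (`extEq_unique`). Absolute convergence provides a sum, which must be that value.
-/

/-- `ext(s,I) = A`. -/
def ExtEq {I : Type*} [PseudoMetricSpace I] (s : Finset I → ℝ) (A : ℝ) : Prop :=
  ∀ ε : ℝ, 0 < ε → ∃ δ : ℝ, 0 < δ ∧ ∀ K : Finset I,
    EMetric.hausdorffEdist (K : Set I) (Set.univ : Set I) < ENNReal.ofReal δ →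
    |s K - A| < ε

/-- The set `I = {1/n : n ∈ ℕ, n ≥ 1} ⊆ ℝ` with the usual metric. -/
def SeqSpace : Set ℝ := {x : ℝ | ∃ n : ℕ, x = 1 / (n + 1)}

/-- The enumeration `n ↦ 1/(n+1)` of `SeqSpace`. -/
noncomputable def seqEquiv : ℕ ≃ ↥SeqSpace :=
  Equiv.ofBijective (fun n : ℕ => (⟨1 / ((n : ℝ) + 1), n, rfl⟩ : ↥SeqSpace)) <| by
    constructor
    · intro m n h
      have h' : (1 : ℝ) / ((m : ℝ) + 1) = 1 / ((n : ℝ) + 1) := congrArg Subtype.val h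
      have h2 := inv_injective (by simpa only [one_div] using h')
      exact_mod_cast add_right_cancel h2
    · rintro ⟨x, n, rfl⟩
      exact ⟨n, rfl⟩

lemma seqEquiv_coe (n : ℕ) : ((seqEquiv n : ↥SeqSpace) : ℝ) = 1 / ((n : ℝ) + 1) := rfl

lemma ceil_inv_seqEquiv (n : ℕ) : ⌈((seqEquiv n : ↥SeqSpace) : ℝ)⁻¹⌉₊ = n + 1 := by
  rw [seqEquiv_coe, one_div, inv_inv]
  exact_mod_cast Nat.ceil_natCast (R := ℝ) (n + 1)

/-- Distinct points of `SeqSpace` have distance at least the gap from `1/(n+1)` to its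
successor `1/(n+2)`. -/
lemma gap_le_dist (n m : ℕ) (h : m ≠ n) :
    1 / (((n : ℝ) + 1) * (n + 2)) ≤ dist (seqEquiv n) (seqEquiv m) := by
  rw [Subtype.dist_eq, Real.dist_eq, seqEquiv_coe, seqEquiv_coe]
  have hn : (0 : ℝ) ≤ n := n.cast_nonneg
  have hm : (0 : ℝ) ≤ m := m.cast_nonneg
  have key : (1 : ℝ) / (n + 1) - 1 / (m + 1) = (m - n) / ((n + 1) * (m + 1)) := by
    field_simp
    ring
  rw [key, abs_div, abs_of_pos (by positivity : (0 : ℝ) < (n + 1) * (m + 1)),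
    div_le_div_iff₀ (by positivity) (by positivity)]
  have main : (m : ℝ) + 1 ≤ |(m : ℝ) - n| * (n + 2) := by
    rcases lt_or_gt_of_ne h with h | h
    · have h' : (m : ℝ) + 1 ≤ n := by exact_mod_cast h
      rw [abs_of_neg (by linarith)]
      nlinarith
    · have h' : (n : ℝ) + 1 ≤ m := by exact_mod_cast h
      rw [abs_of_pos (by linarith)]
      nlinarith
  nlinarith

/-- Every point of `SeqSpace` is isolated. -/
lemma exists_delta_eq (x : ↥SeqSpace) : ∃ δ : ℝ, 0 < δ ∧ ∀ y : ↥SeqSpace, dist x y < δ → y = x := by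
  obtain ⟨n, rfl⟩ := seqEquiv.surjective x
  refine ⟨1 / (((n : ℝ) + 1) * (n + 2)), by positivity, fun y hy => ?_⟩
  obtain ⟨m, rfl⟩ := seqEquiv.surjective y
  by_contra hne
  exact absurd hy (not_lt.2 (gap_le_dist n m fun h => hne (by rw [h])))

/-- A finite set Hausdorff-close to `SeqSpace` contains any prescribed finite set. -/
lemma exists_delta_subset (T : Finset ↥SeqSpace) : ∃ δ : ℝ, 0 < δ ∧ ∀ K : Finset ↥SeqSpace,
    Metric.hausdorffEDist (K : Set ↥SeqSpace) Set.univ < ENNReal.ofReal δ → T ⊆ K := by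
  classical
  induction T using Finset.induction_on with
  | empty => exact ⟨1, one_pos, fun K _ => Finset.empty_subset K⟩
  | insert x T _ ih =>
    obtain ⟨δ₁, h₁, hT⟩ := ih
    obtain ⟨δ₂, h₂, hx⟩ := exists_delta_eq x
    refine ⟨min δ₁ δ₂, lt_min h₁ h₂, fun K hK => Finset.insert_subset ?_ (hT K
      (hK.trans_le (ENNReal.ofReal_le_ofReal (min_le_left _ _))))⟩
    have hK₂ := hK.trans_le (ENNReal.ofReal_le_ofReal (min_le_right δ₁ δ₂))
    rw [Metric.hausdorffEDist_comm] at hK₂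
    obtain ⟨y, hy, hxy⟩ := Metric.exists_edist_lt_of_hausdorffEDist_lt (Set.mem_univ x) hK₂
    rw [edist_dist, ENNReal.ofReal_lt_ofReal_iff h₂] at hxy
    have := hx y hxy
    subst this
    exact hy

lemma extEq_of_hasSum (f : ↥SeqSpace → ℝ) (c : ℝ) (h : HasSum f c) :
    ExtEq (fun H : Finset ↥SeqSpace => ∑ h ∈ H, f h) c := by
  intro ε hε
  have h' : Filter.Tendsto (fun H : Finset ↥SeqSpace => ∑ h ∈ H, f h) Filter.atTop (nhds c) := h
  obtain ⟨T, hT⟩ := Metric.tendsto_atTop.1 h' ε hε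
  obtain ⟨δ, hδ, hK⟩ := exists_delta_subset T
  exact ⟨δ, hδ, fun K hd => hT K (hK K hd)⟩

lemma exists_finset_close (δ : ℝ) (hδ : 0 < δ) : ∃ K : Finset ↥SeqSpace,
    Metric.hausdorffEDist (K : Set ↥SeqSpace) Set.univ < ENNReal.ofReal δ := by
  have hsub : SeqSpace ⊆ Set.Icc (0 : ℝ) 1 := by
    rintro _ ⟨n, rfl⟩
    have hn : (0 : ℝ) ≤ n := n.cast_nonneg
    exact ⟨by positivity, by rw [div_le_one (by positivity)]; linarith⟩
  have htb : TotallyBounded (Set.univ : Set ↥SeqSpace) := by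
    have : TotallyBounded ((Subtype.val : ↥SeqSpace → ℝ) '' Set.univ) := by
      simpa using isCompact_Icc.totallyBounded.subset hsub
    exact (totallyBounded_image_iff isUniformEmbedding_subtype_val.isUniformInducing).1 this
  obtain ⟨t, ht, hcov⟩ := Metric.totallyBounded_iff.1 htb (δ / 2) (half_pos hδ)
  refine ⟨ht.toFinset, lt_of_le_of_lt (b := ENNReal.ofReal (δ / 2)) ?_
    ((ENNReal.ofReal_lt_ofReal_iff hδ).2 (half_lt_self hδ))⟩
  rw [ht.coe_toFinset]
  refine Metric.hausdorffEDist_le_of_mem_edist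
    (fun x _ => ⟨x, Set.mem_univ x, by simp⟩) (fun x hx => ?_)
  obtain ⟨y, hy, hxy⟩ := Set.mem_iUnion₂.1 (hcov hx)
  exact ⟨y, hy, by rw [edist_dist]; exact ENNReal.ofReal_le_ofReal (Metric.mem_ball.1 hxy).le⟩

lemma extEq_unique {s : Finset ↥SeqSpace → ℝ} {A B : ℝ} (hA : ExtEq s A) (hB : ExtEq s B) :
    A = B := by
  refine eq_of_abs_sub_le_all fun ε hε => ?_
  obtain ⟨δ₁, h₁, hA⟩ := hA (ε / 2) (half_pos hε)
  obtain ⟨δ₂, h₂, hB⟩ := hB (ε / 2) (half_pos hε)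
  obtain ⟨K, hK⟩ := exists_finset_close (min δ₁ δ₂) (lt_min h₁ h₂)
  have a₁ := abs_lt.1 (hA K (hK.trans_le (ENNReal.ofReal_le_ofReal (min_le_left _ _))))
  have a₂ := abs_lt.1 (hB K (hK.trans_le (ENNReal.ofReal_le_ofReal (min_le_right _ _))))
  exact abs_le.2 ⟨by linarith [a₁.1, a₂.2], by linarith [a₁.2, a₂.1]⟩

/-- For an absolutely convergent series `Σ_{i≥1} a_i` (indexed here by
`a (n+1)`, `n : ℕ`), the sum equals `c` iff `ext(s, I) = c`, where
`I = {1/n : n ≥ 1}` and `s(H) = Σ_{h ∈ H} a_{1/h}`. -/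
theorem stmt_6 (a : ℕ → ℝ) (habs : Summable fun n : ℕ => |a (n + 1)|) (c : ℝ) :
    HasSum (fun n : ℕ => a (n + 1)) c ↔
      ExtEq (fun H : Finset ↥SeqSpace => ∑ h ∈ H, a ⌈((h : ℝ))⁻¹⌉₊) c := by
  have key : ∀ d : ℝ, HasSum (fun n : ℕ => a (n + 1)) d →
      ExtEq (fun H : Finset ↥SeqSpace => ∑ h ∈ H, a ⌈((h : ℝ))⁻¹⌉₊) d := by
    intro d hd
    refine extEq_of_hasSum (fun h : ↥SeqSpace => a ⌈((h : ℝ))⁻¹⌉₊) d ?_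
    rw [← seqEquiv.hasSum_iff]
    simpa only [Function.comp_def, ceil_inv_seqEquiv] using hd
  refine ⟨key c, fun h => ?_⟩
  obtain ⟨d, hd⟩ := habs.of_abs
  rwa [extEq_unique h (key d hd)]
end

section
/- Let I = {1/2^n : n ∈ ℕ} ⊆ ℝ with the usual metric. If K ⊆ I is finite, stretched and |K| ≥ 2, then, setting k_0 = min K and k_1 = min(K \ {k_0}), one has K = {i ∈ I : i ≥ k_1} ∪ {k_0}. -/
/-!
Distinct elements of the dyadic set differ by a factor of at least `2` (`two_mul_le_of_lt`).
If some `i ≥ k₁` were missing from `K`, then `i ≥ 2 k₁`, and every element of `K` would be at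
distance at least `i / 2 ≥ k₁` from `i`, so the Hausdorff distance from `K` to the whole space
would be at least `k₁`. But stretchedness bounds that distance by `k₁ - k₀ < k₁`.
-/

/-- The set `I = {1/2^n : n ∈ ℕ, n ≥ 1} ⊆ ℝ` with the usual metric. -/
def DyadicSpace : Set ℝ := {x : ℝ | ∃ n : ℕ, x = 1 / 2 ^ (n + 1)}

theorem DyadicSpace.pos (x : ↥DyadicSpace) : 0 < (x : ℝ) := by
  obtain ⟨_, n, rfl⟩ := x
  positivity

theorem DyadicSpace.two_mul_le_of_lt {x y : ↥DyadicSpace} (h : x < y) :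
    2 * (x : ℝ) ≤ y := by
  obtain ⟨_, m, rfl⟩ := x
  obtain ⟨_, n, rfl⟩ := y
  have h' : (1 : ℝ) / 2 ^ (m + 1) < 1 / 2 ^ (n + 1) := h
  rw [one_div_lt_one_div (by positivity) (by positivity),
    pow_lt_pow_iff_right₀ (by norm_num)] at h'
  have h2 : 2 * ((1 : ℝ) / 2 ^ (m + 1)) = 1 / 2 ^ m := by
    rw [pow_succ]; field_simp
  change 2 * ((1 : ℝ) / 2 ^ (m + 1)) ≤ 1 / 2 ^ (n + 1)
  rw [h2]
  exact one_div_le_one_div_of_le (by positivity)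
    (pow_le_pow_right₀ (by norm_num) (by omega))

/-- If `K ⊆ I = {1/2^n : n ≥ 1}` is finite, stretched and `|K| ≥ 2`,
then with `k₀ = min K` and `k₁ = min (K \ {k₀})` we have
`K = {i ∈ I : i ≥ k₁} ∪ {k₀}`. -/
theorem stmt_7 (K : Finset ↥DyadicSpace)
    (hstr : ∀ x ∈ K, ∀ y ∈ K, x ≠ y →
      EMetric.hausdorffEdist (K : Set ↥DyadicSpace) (Set.univ : Set ↥DyadicSpace) ≤
        edist x y)
    (hcard : 2 ≤ K.card)
    (k0 k1 : ↥DyadicSpace)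
    (hk0 : IsLeast (K : Set ↥DyadicSpace) k0)
    (hk1 : IsLeast ((K : Set ↥DyadicSpace) \ {k0}) k1) :
    (K : Set ↥DyadicSpace) = {i : ↥DyadicSpace | k1 ≤ i} ∪ {k0} := by
  ext i
  constructor
  · intro hi
    by_cases h : i = k0
    · exact Or.inr h
    · exact Or.inl (hk1.2 ⟨hi, h⟩)
  rintro (hi | rfl)
  swap
  · exact hk0.1
  by_contra hiK
  have hne : k1 ≠ k0 := hk1.1.2
  have h01 : k0 < k1 := lt_of_le_of_ne (hk0.2 hk1.1.1) hne.symm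
  have hlt : k1 < i := lt_of_le_of_ne hi fun h => hiK (h ▸ hk1.1.1)
  have h2 := DyadicSpace.two_mul_le_of_lt hlt
  have hpos := DyadicSpace.pos k0
  have hfar : ENNReal.ofReal (k1 : ℝ) ≤ Metric.infEDist i (K : Set ↥DyadicSpace) := by
    refine Metric.le_infEDist.2 fun k hk => ?_
    rw [edist_dist]
    refine ENNReal.ofReal_le_ofReal ?_
    rw [Subtype.dist_eq, Real.dist_eq]
    rcases lt_trichotomy k i with h | h | h
    · have := DyadicSpace.two_mul_le_of_lt h
      exact le_trans (by linarith) (le_abs_self _)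
    · exact absurd (h ▸ hk) hiK
    · have := DyadicSpace.two_mul_le_of_lt h
      have := DyadicSpace.pos k1
      exact le_trans (by linarith) (neg_le_abs _)
  have hH : Metric.infEDist i (K : Set ↥DyadicSpace) ≤
      Metric.hausdorffEDist (Set.univ : Set ↥DyadicSpace) K :=
    Metric.infEDist_le_hausdorffEDist_of_mem (Set.mem_univ i)
  rw [Metric.hausdorffEDist_comm] at hH
  have hle := (hfar.trans hH).trans (hstr k1 hk1.1.1 k0 hk0.1 hne)
  rw [edist_dist, ENNReal.ofReal_le_ofReal_iff dist_nonneg, Subtype.dist_eq, Real.dist_eq,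
    abs_of_pos (sub_pos.2 (show (k0 : ℝ) < k1 from h01))] at hle
  linarith
end

section
/- Let (a_i) be a sequence of real numbers. Let I = {1/2^n : n ∈ ℕ} ⊆ ℝ with the usual metric, and for finite H ⊆ I let s(H) = Σ_{h ∈ H} a_{−log₂ h} (i.e. s(H) sums a_n over those n with 1/2^n ∈ H). Then the partial sums Σ_{i=1}^n a_i converge to A ∈ ℝ if and only if ext_str(s,I) = A. -/
/-!
Write `p n = 1 / 2 ^ (n + 1)`, so that `I = {p 0, p 1, …}`.

A finite `K ⊆ I` misses some point; let `p k` be the first one. The points of `I` nearest to `p k`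
are at distance at least `p (k + 1)`, so `d_H(K, I) ≥ p (k + 1)`
(`ofReal_le_hausdorffEDist`). Two distinct points of `I` beyond `p k` are closer to each other than
`p (k + 1)`, so a stretched `K` contains at most one of them. Hence a stretched set
is `{p 0, …, p (k - 1)}` or `{p 0, …, p (k - 1), p m}` with `m > k`
(`eq_range_or_insert`). Its sum is a partial sum, up to one later term `a (m + 1)`, and
`k → ∞` as `d_H(K, I) → 0`; since the terms of a convergent series tend to `0`, the stretched
extension equals the sum of the series.

Conversely every initial segment `{p 0, …, p n}` is stretched, with
`d_H ≤ p n` (`hausdorffEDist_range_le`, `isStretched_range`), so the partial sums are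
values of `s` along stretched sets whose Hausdorff distance to `I` tends to `0`.
-/

/-- A finite subset `K` of a (bounded) pseudo-metric space is stretched if
`d(x,y) ≥ d_H(K,I)` for all distinct `x, y ∈ K`. -/
def IsStretched {I : Type*} [PseudoMetricSpace I] (K : Finset I) : Prop :=
  ∀ x ∈ K, ∀ y ∈ K, x ≠ y →
    EMetric.hausdorffEdist (K : Set I) (Set.univ : Set I) ≤ edist x y

/-- The stretched extension `ext_str(s,I) = A`. -/
def ExtStrEq {I : Type*} [PseudoMetricSpace I] (s : Finset I → ℝ) (A : ℝ) : Prop :=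
  ∀ ε : ℝ, 0 < ε → ∃ δ : ℝ, 0 < δ ∧ ∀ K : Finset I, IsStretched K →
    EMetric.hausdorffEdist (K : Set I) (Set.univ : Set I) < ENNReal.ofReal δ →
    |s K - A| < ε

namespace DyadicSeries

/-- The real number `1 / 2 ^ (n + 1)`, the `n`-th point of `DyadicSpace` counted from `0`. -/
noncomputable def p (n : ℕ) : ℝ := 1 / 2 ^ (n + 1)

lemma p_pos (n : ℕ) : 0 < p n := by unfold p; positivity

lemma p_succ (n : ℕ) : p (n + 1) = p n / 2 := by
  unfold p; rw [pow_succ 2 (n + 1)]; field_simp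

lemma p_strictAnti : StrictAnti p :=
  strictAnti_nat_of_succ_lt fun n => by rw [p_succ]; linarith [p_pos n]

lemma two_mul_p_le {m n : ℕ} (h : m < n) : 2 * p n ≤ p m := by
  have := p_strictAnti.antitone (Nat.succ_le_of_lt h)
  rw [Nat.succ_eq_add_one, p_succ] at this
  linarith

lemma tendsto_p : Filter.Tendsto p Filter.atTop (nhds 0) := by
  have h := (tendsto_pow_atTop_nhds_zero_of_lt_one (r := (1 / 2 : ℝ)) (by norm_num)
    (by norm_num)).comp (Filter.tendsto_add_atTop_nat 1)
  refine h.congr fun n => ?_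
  simp [p]

/-- The enumeration `n ↦ 1 / 2 ^ (n + 1)` of `DyadicSpace`, as a bijection. -/
noncomputable def e : ℕ ≃ ↥DyadicSpace :=
  Equiv.ofBijective (fun n => ⟨p n, n, rfl⟩)
    ⟨fun _ _ h => p_strictAnti.injective (congrArg Subtype.val h),
      fun ⟨_, n, hn⟩ => ⟨n, Subtype.ext hn.symm⟩⟩

lemma coe_e (n : ℕ) : (e n : ℝ) = p n := rfl

lemma edist_e (m n : ℕ) : edist (e m) (e n) = ENNReal.ofReal |p m - p n| := by
  rw [edist_dist, Subtype.dist_eq, Real.dist_eq, coe_e, coe_e]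

lemma ceil_logb_e (n : ℕ) : ⌈Real.logb 2 ((e n : ℝ))⁻¹⌉₊ = n + 1 := by
  have : ((e n : ℝ))⁻¹ = (2 : ℝ) ^ (n + 1) := by rw [coe_e]; simp [p]
  rw [this, Real.logb_pow, Real.logb_self_eq_one (by norm_num), mul_one]
  exact Nat.ceil_natCast _

lemma sum_map_e (a : ℕ → ℝ) (J : Finset ℕ) :
    ∑ h ∈ J.map e.toEmbedding, a ⌈Real.logb 2 ((h : ℝ))⁻¹⌉₊ = ∑ i ∈ J, a (i + 1) := by
  rw [Finset.sum_map]
  exact Finset.sum_congr rfl fun i _ => congrArg a (ceil_logb_e i)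

lemma p_succ_le_abs_sub {k j : ℕ} (h : j ≠ k) : p (k + 1) ≤ |p k - p j| := by
  rw [p_succ]
  rcases lt_or_gt_of_ne h with h | h
  · have := two_mul_p_le h
    rw [abs_sub_comm]
    exact le_trans (by linarith [p_pos k]) (le_abs_self _)
  · have := two_mul_p_le h
    exact le_trans (by linarith) (le_abs_self _)

/-- The empty set is covered too: its Hausdorff distance to `I` is infinite. -/
lemma ofReal_le_hausdorffEDist {J : Finset ℕ} {k : ℕ} (hk : k ∉ J) :
    ENNReal.ofReal (p (k + 1)) ≤
      Metric.hausdorffEDist (J.map e.toEmbedding : Set ↥DyadicSpace) Set.univ := by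
  by_contra! h
  rw [Metric.hausdorffEDist_comm] at h
  obtain ⟨y, hy, hlt⟩ :=
    Metric.exists_edist_lt_of_hausdorffEDist_lt (Set.mem_univ (e k)) h
  obtain ⟨j, hj, rfl⟩ := Finset.mem_map.1 (Finset.mem_coe.1 hy)
  have hjk : j ≠ k := fun h => hk (h ▸ hj)
  rw [Equiv.coe_toEmbedding, edist_e] at hlt
  exact absurd hlt (not_lt.2 (ENNReal.ofReal_le_ofReal (p_succ_le_abs_sub hjk)))

/-- If `J` omits `k`, a stretched set indexed by `J` has at most one point beyond `p k`. -/
lemma eq_of_isStretched {J : Finset ℕ} (hJ : IsStretched (J.map e.toEmbedding)) {k : ℕ}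
    (hk : k ∉ J) {m n : ℕ} (hm : m ∈ J) (hn : n ∈ J) (hkm : k < m) (hkn : k < n) : m = n := by
  by_contra hne
  have h := (ofReal_le_hausdorffEDist hk).trans
    (hJ (e m) (Finset.mem_map_of_mem _ hm) (e n) (Finset.mem_map_of_mem _ hn)
      (e.injective.ne hne))
  rw [edist_e, ENNReal.ofReal_le_ofReal_iff (abs_nonneg _)] at h
  have h1 := p_strictAnti.antitone (Nat.succ_le_of_lt hkm)
  have h2 := p_strictAnti.antitone (Nat.succ_le_of_lt hkn)
  rw [Nat.succ_eq_add_one] at h1 h2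
  have : |p m - p n| < p (k + 1) :=
    abs_lt.2 ⟨by linarith [p_pos m], by linarith [p_pos n]⟩
  linarith

/-- The shape of stretched sets; `k` is the first index omitted by `J`. -/
lemma eq_range_or_insert {J : Finset ℕ} (hJ : IsStretched (J.map e.toEmbedding)) :
    ∃ k, k ∉ J ∧ (J = Finset.range k ∨ ∃ m, k < m ∧ J = insert m (Finset.range k)) := by
  have hex : ∃ k, k ∉ J := Infinite.exists_notMem_finset J
  classical
  obtain ⟨k, hk, hmin⟩ : ∃ k, k ∉ J ∧ ∀ i < k, i ∈ J :=
    ⟨Nat.find hex, Nat.find_spec hex, fun i hi => not_not.1 (Nat.find_min hex hi)⟩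
  refine ⟨k, hk, ?_⟩
  by_cases h : ∃ m ∈ J, k < m
  · obtain ⟨m, hm, hkm⟩ := h
    refine Or.inr ⟨m, hkm, ?_⟩
    ext i
    rw [Finset.mem_insert, Finset.mem_range]
    refine ⟨fun hi => ?_, ?_⟩
    · rcases lt_trichotomy i k with h | h | h
      · exact Or.inr h
      · exact absurd (h ▸ hi) hk
      · exact Or.inl (eq_of_isStretched hJ hk hi hm h hkm)
    · rintro (rfl | hi)
      · exact hm
      · exact hmin i hi
  · push Not at h
    refine Or.inl ?_
    ext i
    rw [Finset.mem_range]
    exact ⟨fun hi => lt_of_le_of_ne (h i hi) fun hik => hk (hik ▸ hi), hmin i⟩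

lemma hausdorffEDist_range_le (n : ℕ) :
    Metric.hausdorffEDist ((Finset.range (n + 1)).map e.toEmbedding : Set ↥DyadicSpace)
      Set.univ ≤ ENNReal.ofReal (p n) := by
  refine Metric.hausdorffEDist_le_of_mem_edist (fun x _ => ⟨x, Set.mem_univ _, by simp⟩) ?_
  intro x _
  obtain ⟨i, rfl⟩ := e.surjective x
  by_cases hi : i < n + 1
  · exact ⟨e i, Finset.mem_coe.2 (Finset.mem_map_of_mem _ (Finset.mem_range.2 hi)), by simp⟩
  · refine ⟨e n, Finset.mem_coe.2 (Finset.mem_map_of_mem _ (Finset.mem_range.2 (by omega))), ?_⟩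
    rw [edist_e]
    refine ENNReal.ofReal_le_ofReal (abs_le.2 ⟨by linarith [p_pos i], ?_⟩)
    have : p i ≤ p n := p_strictAnti.antitone (by omega)
    linarith [p_pos n]

lemma isStretched_range (n : ℕ) :
    IsStretched ((Finset.range (n + 1)).map e.toEmbedding) := by
  intro x hx y hy hxy
  obtain ⟨i, hi, rfl⟩ := Finset.mem_map.1 hx
  obtain ⟨j, hj, rfl⟩ := Finset.mem_map.1 hy
  rw [Finset.mem_range] at hi hj
  have hij : i ≠ j := fun h => hxy (h ▸ rfl)
  refine (hausdorffEDist_range_le n).trans ?_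
  rw [Equiv.coe_toEmbedding, edist_e]
  refine ENNReal.ofReal_le_ofReal ?_
  rcases lt_or_gt_of_ne hij with h | h
  · have h1 := two_mul_p_le h
    have h2 : p n ≤ p j := p_strictAnti.antitone (by omega)
    exact le_trans (by linarith) (le_abs_self _)
  · have h1 := two_mul_p_le h
    have h2 : p n ≤ p i := p_strictAnti.antitone (by omega)
    rw [abs_sub_comm]
    exact le_trans (by linarith) (le_abs_self _)

end DyadicSeries

open DyadicSeries in
/-- For any real series `Σ_{i≥1} a_i` (indexed here by `a (n+1)`),
the partial sums converge to `A` iff `ext_str(s, I) = A`, where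
`I = {1/2^n : n ≥ 1}` and `s(H) = Σ_{h ∈ H} a_{−log₂ h}`. -/
theorem stmt_8 (a : ℕ → ℝ) (A : ℝ) :
    Filter.Tendsto (fun n : ℕ => ∑ i ∈ Finset.range n, a (i + 1))
        Filter.atTop (nhds A) ↔
      ExtStrEq (fun H : Finset ↥DyadicSpace =>
        ∑ h ∈ H, a ⌈Real.logb 2 ((h : ℝ))⁻¹⌉₊) A := by
  constructor
  · intro hA ε hε
    -- The terms are differences of consecutive partial sums, hence tend to `0`.
    have ha : Filter.Tendsto (fun n => a (n + 1)) Filter.atTop (nhds 0) := by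
      have h := (hA.comp (Filter.tendsto_add_atTop_nat 1)).sub hA
      rw [sub_self] at h
      refine h.congr fun n => ?_
      simp [Finset.sum_range_succ]
    obtain ⟨N₁, hN₁⟩ := Metric.tendsto_atTop.1 hA (ε / 2) (half_pos hε)
    obtain ⟨N₂, hN₂⟩ := Metric.tendsto_atTop.1 ha (ε / 2) (half_pos hε)
    refine ⟨p (max N₁ N₂), p_pos _, fun K hK hlt => ?_⟩
    obtain ⟨J, rfl⟩ : ∃ J : Finset ℕ, K = J.map e.toEmbedding :=
      ⟨K.map e.symm.toEmbedding, by ext x; simp⟩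
    obtain ⟨k, hk, hJ⟩ := eq_range_or_insert hK
    have hkN : max N₁ N₂ < k + 1 := by
      refine p_strictAnti.lt_iff_gt.1 ?_
      exact (ENNReal.ofReal_lt_ofReal_iff (p_pos _)).1
        ((ofReal_le_hausdorffEDist hk).trans_lt hlt)
    have h1 := hN₁ k (by omega)
    rw [Real.dist_eq] at h1
    simp only [sum_map_e]
    rcases hJ with rfl | ⟨m, hm, rfl⟩
    · linarith
    · have h2 := hN₂ m (by omega)
      rw [Real.dist_eq, sub_zero] at h2
      rw [Finset.sum_insert (by simp; omega), add_sub_assoc]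
      exact (abs_add_le _ _).trans_lt (by linarith)
  · intro h
    rw [← Filter.tendsto_add_atTop_iff_nat 1, Metric.tendsto_atTop]
    intro ε hε
    obtain ⟨δ, hδ, H⟩ := h ε hε
    obtain ⟨N, hN⟩ := Metric.tendsto_atTop.1 tendsto_p δ hδ
    refine ⟨N, fun n hn => ?_⟩
    have hp := hN n hn
    rw [Real.dist_eq, sub_zero, abs_of_pos (p_pos n)] at hp
    have := H _ (isStretched_range n)
      ((hausdorffEDist_range_le n).trans_lt ((ENNReal.ofReal_lt_ofReal_iff hδ).2 hp))
    simp only [sum_map_e] at this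
    rwa [Real.dist_eq]
end

section
/- Let f : [a,b] → ℝ be bounded, let I = [a,b] with the usual metric, and for finite H ⊆ I define s(H) as follows: writing H ∪ {a,b} = {a_0, …, a_n} with a = a_0 < ⋯ < a_n = b, set s(H) = f(a_1)(a_2 − a_0) + f(a_3)(a_4 − a_2) + ⋯, ending with f(a_{n−1})(a_n − a_{n−2}) if n is even and with f(b)(a_n − a_{n−1}) if n is odd. Then f is Riemann integrable on [a,b] with ∫_a^b f = A if and only if ext(s,I) = A. -/
/-- Given the increasingly sorted list `[a₀, a₁, …, aₙ]`, returns
`f(a₁)(a₂ − a₀) + f(a₃)(a₄ − a₂) + ⋯`, ending with `f(a_{n−1})(aₙ − a_{n−2})`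
if `n` is even and with `f(b)(aₙ − a_{n−1})` if `n` is odd. -/
def riemannVal (f : ℝ → ℝ) (b : ℝ) : List ℝ → ℝ
  | x :: y :: z :: l => f y * (z - x) + riemannVal f b (z :: l)
  | [x, y] => f b * (y - x)
  | _ => 0

/-- The function `s` of the paper for the Riemann integral: `s(H) = riemannVal`
applied to the sorted list of `H ∪ {a, b}`. -/
noncomputable def riemannS (f : ℝ → ℝ) (a b : ℝ) (H : Finset ↥(Set.Icc a b)) : ℝ :=
  riemannVal f b ((insert a (insert b (H.image Subtype.val))).sort (· ≤ ·))

/-- `∫_a^b f = A` in the Riemann sense: every Riemann sum over a tagged partition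
of `[a,b]` with mesh `< δ` is within `ε` of `A`. -/
def RiemannIntegralEq (f : ℝ → ℝ) (a b A : ℝ) : Prop :=
  ∀ ε : ℝ, 0 < ε → ∃ δ : ℝ, 0 < δ ∧ ∀ (n : ℕ) (x t : ℕ → ℝ),
    x 0 = a → x n = b →
    (∀ i < n, x i ≤ x (i + 1)) →
    (∀ i < n, x (i + 1) - x i < δ) →
    (∀ i < n, t i ∈ Set.Icc (x i) (x (i + 1))) →
    |(∑ i ∈ Finset.range n, f (t i) * (x (i + 1) - x i)) - A| < ε

/-! ### From sorted lists to tagged partitions -/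

/-- `riemannVal` of a strictly increasing list is a Riemann sum whose mesh is less than `2δ` if
neighbouring points of the list are less than `δ` apart. -/
lemma exists_partition_of_list (f : ℝ → ℝ) (b δ : ℝ) : ∀ (l : List ℝ) (u : ℝ),
    (u :: l).Pairwise (· < ·) → b ∈ u :: l → (∀ p ∈ u :: l, p ≤ b) →
    (∀ p ∈ u :: l, ∀ q ∈ u :: l, p < q → (∀ r ∈ u :: l, r ≤ p ∨ q ≤ r) → q - p < δ) →
    ∃ (n : ℕ) (x t : ℕ → ℝ), x 0 = u ∧ x n = b ∧ (∀ i < n, x i ≤ x (i + 1)) ∧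
      (∀ i < n, x (i + 1) - x i < 2 * δ) ∧ (∀ i < n, t i ∈ Set.Icc (x i) (x (i + 1))) ∧
      ∑ i ∈ Finset.range n, f (t i) * (x (i + 1) - x i) = riemannVal f b (u :: l)
  | [], u, _, hb, _, _ => by
    simp only [List.mem_singleton] at hb
    exact ⟨0, fun _ => u, fun _ => u, by simp [hb, riemannVal]⟩
  | [y], u, hs, hb, hle, hgap => by
    have huy : u < y := by simpa using hs
    have hyb : y = b := by
      have h1 := hle y (by simp)
      simp only [List.mem_cons, List.not_mem_nil, or_false] at hb
      rcases hb with h | h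
      · linarith
      · exact h.symm
    subst hyb
    have hg : y - u < δ := hgap u (by simp) y (by simp) huy (by simp)
    refine ⟨1, fun i => Nat.casesOn i u fun _ => y, fun _ => y, rfl, rfl, ?_, ?_, ?_, ?_⟩
    · intro i hi
      obtain rfl : i = 0 := by omega
      exact huy.le
    · intro i hi
      obtain rfl : i = 0 := by omega
      change y - u < 2 * δ
      linarith
    · intro i hi
      obtain rfl : i = 0 := by omega
      exact ⟨huy.le, le_rfl⟩
    · simp [riemannVal]
  | y :: z :: l, u, hs, hb, hle, hgap => by
    obtain ⟨hu, hs1⟩ := List.pairwise_cons.1 hs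
    obtain ⟨hy, hs2⟩ := List.pairwise_cons.1 hs1
    obtain ⟨hz, -⟩ := List.pairwise_cons.1 hs2
    have huy : u < y := hu y (by simp)
    have hyz : y < z := hy z (by simp)
    have hzb : z ≤ b := hle z (by simp)
    have hb2 : b ∈ z :: l := by
      rcases List.mem_cons.1 hb with h | h
      · linarith
      rcases List.mem_cons.1 h with h | h
      · linarith
      · exact h
    obtain ⟨n, x, t, hx0, hxn, hmono, hmesh, htag, hsum⟩ :=
      exists_partition_of_list f b δ l z hs2 hb2
        (fun p hp => hle p (List.mem_cons_of_mem _ (List.mem_cons_of_mem _ hp)))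
        (by
          intro p hp q hq hpq hr
          refine hgap p (List.mem_cons_of_mem _ (List.mem_cons_of_mem _ hp)) q
            (List.mem_cons_of_mem _ (List.mem_cons_of_mem _ hq)) hpq ?_
          intro r hrm
          rcases List.mem_cons.1 hrm with h | h
          · exact Or.inl (h ▸ (hu p (List.mem_cons_of_mem _ hp)).le)
          rcases List.mem_cons.1 h with h | h
          · exact Or.inl (h ▸ (hy p hp).le)
          · exact hr r h)
    have hg1 : y - u < δ := by
      refine hgap u (by simp) y (by simp) huy fun r hr => ?_
      rcases List.mem_cons.1 hr with h | h
      · exact Or.inl h.le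
      rcases List.mem_cons.1 h with h | h
      · exact Or.inr h.ge
      · exact Or.inr (hy r h).le
    have hg2 : z - y < δ := by
      refine hgap y (by simp) z (by simp) hyz fun r hr => ?_
      rcases List.mem_cons.1 hr with h | h
      · exact Or.inl (h ▸ huy.le)
      rcases List.mem_cons.1 h with h | h
      · exact Or.inl h.le
      rcases List.mem_cons.1 h with h | h
      · exact Or.inr h.ge
      · exact Or.inr (hz r h).le
    refine ⟨n + 1, fun i => Nat.casesOn i u x, fun i => Nat.casesOn i y t, rfl, hxn,
      ?_, ?_, ?_, ?_⟩
    · rintro (_ | i) hi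
      · change u ≤ x 0
        linarith
      · exact hmono i (by omega)
    · rintro (_ | i) hi
      · change x 0 - u < 2 * δ
        linarith
      · exact hmesh i (by omega)
    · rintro (_ | i) hi
      · change u ≤ y ∧ y ≤ x 0
        constructor <;> linarith
      · exact htag i (by omega)
    · rw [Finset.sum_range_succ']
      change ∑ i ∈ Finset.range n, f (t i) * (x (i + 1) - x i) + f y * (x 0 - u) =
        f y * (z - u) + riemannVal f b (z :: l)
      rw [hsum, hx0]
      ring

/-! ### From tagged partitions to sorted lists -/

/-- The Riemann sum with `n + 1` intervals `[u, x 0], [x 0, x 1], …, [x (n-1), x n]` and tags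
`t 0, …, t n`. The left end point `u` is kept apart from the sequence `x` because the first
interval is the one that gets merged or split off. -/
noncomputable def tagSum (f : ℝ → ℝ) (n : ℕ) (u : ℝ) (x t : ℕ → ℝ) : ℝ :=
  f (t 0) * (x 0 - u) + ∑ i ∈ Finset.range n, f (t (i + 1)) * (x (i + 1) - x i)

lemma tagSum_succ (f : ℝ → ℝ) (n : ℕ) (u : ℝ) (x t : ℕ → ℝ) :
    tagSum f (n + 1) u x t =
      f (t 0) * (x 0 - u) + tagSum f n (x 0) (fun i => x (i + 1)) (fun i => t (i + 1)) := by
  simp only [tagSum, Finset.sum_range_succ']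
  ring

lemma tagSum_left (f : ℝ → ℝ) (n : ℕ) (u v : ℝ) (x t : ℕ → ℝ) :
    tagSum f n u x t = tagSum f n v x t + f (t 0) * (v - u) := by
  simp only [tagSum]
  ring

/-- A tagged partition of `[u, b]` (indexed as in `tagSum`) with tags in `[a, b]`, each of whose
intervals has its end points within `η` of its tag. -/
structure Tagged (a b η : ℝ) (n : ℕ) (u : ℝ) (x t : ℕ → ℝ) : Prop where
  left : u ≤ t 0
  left_lt : t 0 - u < η
  right : ∀ i ≤ n, t i ≤ x i
  right_lt : ∀ i ≤ n, x i - t i < η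
  next : ∀ i < n, x i ≤ t (i + 1)
  next_lt : ∀ i < n, t (i + 1) - x i < η
  last : x n = b
  mem : ∀ i ≤ n, t i ∈ Set.Icc a b

/-- Dropping the first interval and moving the new left end point to `v`. -/
lemma Tagged.tail {a b η : ℝ} {n : ℕ} {u : ℝ} {x t : ℕ → ℝ} (h : Tagged a b η (n + 1) u x t)
    {v : ℝ} (hv : v ≤ t 1) (hv' : t 1 - v < η) :
    Tagged a b η n v (fun i => x (i + 1)) (fun i => t (i + 1)) where
  left := hv
  left_lt := hv'
  right i hi := h.right (i + 1) (by omega)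
  right_lt i hi := h.right_lt (i + 1) (by omega)
  next i hi := h.next (i + 1) (by omega)
  next_lt i hi := h.next_lt (i + 1) (by omega)
  last := h.last
  mem i hi := h.mem (i + 1) (by omega)

/-- If the first two tags differ, the partition point between them can be moved strictly between
them; the distance moved is less than any prescribed `κ`. -/
lemma Tagged.exists_between {a b η : ℝ} {n : ℕ} {u : ℝ} {x t : ℕ → ℝ}
    (h : Tagged a b η (n + 1) u x t) (ht : t 0 < t 1) {κ : ℝ} (hκ : 0 < κ) :
    ∃ v, t 0 < v ∧ v < t 1 ∧ |x 0 - v| < κ ∧ v - t 0 < η ∧ t 1 - v < η := by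
  have h1 := h.right 0 (by omega)
  have h2 := h.right_lt 0 (by omega)
  have h3 : x 0 ≤ t 1 := h.next 0 (by omega)
  have h4 : t 1 - x 0 < η := h.next_lt 0 (by omega)
  have key : max (max (t 0) (x 0 - κ)) (t 1 - η) < min (min (t 1) (x 0 + κ)) (t 0 + η) := by
    simp only [max_lt_iff, lt_min_iff]
    refine ⟨⟨⟨⟨?_, ?_⟩, ?_⟩, ⟨⟨?_, ?_⟩, ?_⟩⟩, ⟨⟨?_, ?_⟩, ?_⟩⟩ <;> linarith
  obtain ⟨v, hv1, hv2⟩ := _root_.exists_between key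
  simp only [max_lt_iff, lt_min_iff] at hv1 hv2
  refine ⟨v, hv1.1.1, hv2.1.1, ?_, by linarith, by linarith⟩
  rw [abs_lt]
  constructor <;> linarith

/-- The strictly increasing list `u :: l` ends in `b`, it is `η`-dense in `[u, b]`, and its
`riemannVal` differs from `S` by less than `ε`. -/
def Approx (f : ℝ → ℝ) (b η ε S u : ℝ) (l : List ℝ) : Prop :=
  (u :: l).Pairwise (· < ·) ∧ b ∈ l ∧ (∀ p ∈ l, p ≤ b) ∧
    (∀ z ∈ Set.Icc u b, ∃ p ∈ l, |z - p| < η) ∧ |riemannVal f b (u :: l) - S| < ε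

/-- Prepending a tag `τ` and a partition point `v` to an approximating list. -/
lemma Approx.cons {f : ℝ → ℝ} {b η ε S v : ℝ} {l : List ℝ} (h : Approx f b η ε S v l)
    {u τ ε' S' : ℝ} (hu : u < τ) (hτ : τ < v) (hu' : τ - u < η) (hτ' : v - τ < η)
    (hS : |f τ * (v - u) + S - S'| ≤ ε' - ε) : Approx f b η ε' S' u (τ :: v :: l) := by
  obtain ⟨hs, hb, hle, hd, hv⟩ := h
  have hvl := (List.pairwise_cons.1 hs).1
  refine ⟨?_, by simp [hb], ?_, ?_, ?_⟩
  · refine List.pairwise_cons.2 ⟨?_, List.pairwise_cons.2 ⟨?_, hs⟩⟩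
    · intro p hp
      rcases List.mem_cons.1 hp with rfl | hp
      · exact hu
      rcases List.mem_cons.1 hp with rfl | hp
      · exact hu.trans hτ
      · exact (hu.trans hτ).trans (hvl p hp)
    · intro p hp
      rcases List.mem_cons.1 hp with rfl | hp
      · exact hτ
      · exact hτ.trans (hvl p hp)
  · have hvb : v < b := hvl b hb
    intro p hp
    rcases List.mem_cons.1 hp with rfl | hp
    · linarith
    rcases List.mem_cons.1 hp with rfl | hp
    · exact hvb.le
    · exact hle p hp
  · intro z hz
    rcases le_total z v with hzv | hzv
    · refine ⟨τ, by simp, ?_⟩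
      have := hz.1
      rw [abs_lt]
      constructor <;> linarith
    · obtain ⟨p, hp, hpz⟩ := hd z ⟨hzv, hz.2⟩
      exact ⟨p, by simp [hp], hpz⟩
  · change |f τ * (v - u) + riemannVal f b (v :: l) - S'| < ε'
    rw [abs_lt] at hv ⊢
    rw [abs_le] at hS
    constructor <;> linarith [hv.1, hv.2, hS.1, hS.2]

lemma Approx.mono {f : ℝ → ℝ} {b η η' ε S u : ℝ} {l : List ℝ} (h : Approx f b η ε S u l)
    (hη : η ≤ η') : Approx f b η' ε S u l := by
  obtain ⟨hs, hb, hle, hd, hv⟩ := h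
  refine ⟨hs, hb, hle, fun z hz => ?_, hv⟩
  obtain ⟨p, hp, hpz⟩ := hd z hz
  exact ⟨p, hp, hpz.trans_le hη⟩

/-- If the first tag is not the left end point, the Riemann sum is approximated with arbitrarily
small error. -/
lemma Tagged.exists_list_of_lt {f : ℝ → ℝ} {a b M η : ℝ} (hM : 0 ≤ M)
    (hf : ∀ z ∈ Set.Icc a b, |f z| ≤ M) : ∀ (n : ℕ) (u : ℝ) (x t : ℕ → ℝ) (ε : ℝ), 0 < ε →
    u < t 0 → Tagged a b η n u x t → ∃ l, Approx f b η ε (tagSum f n u x t) u l := by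
  intro n
  induction n with
  | zero =>
    intro u x t ε hε hu h
    have hl := h.left_lt
    have hr := h.right 0 le_rfl
    have hr' := h.right_lt 0 le_rfl
    have hx : x 0 = b := h.last
    rcases eq_or_lt_of_le hr with htb | htb
    -- the only tag is `b`, which `riemannVal` uses for a list of two points
    · refine ⟨[b], by simp; linarith, by simp, by simp, ?_, ?_⟩
      · intro z hz
        refine ⟨b, by simp, ?_⟩
        rw [abs_lt]
        constructor <;> linarith [hz.1, hz.2]
      · simpa [riemannVal, tagSum, htb, hx] using hε
    · refine ⟨[t 0, b], by simp; grind, by simp, by simp; linarith, ?_, ?_⟩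
      · intro z hz
        refine ⟨t 0, by simp, ?_⟩
        rw [abs_lt]
        constructor <;> linarith [hz.1, hz.2]
      · simpa [riemannVal, tagSum, hx] using hε
  | succ n ih =>
    intro u x t ε hε hu h
    have h1 := h.right 0 (by omega)
    have h3 : x 0 ≤ t 1 := h.next 0 (by omega)
    rcases eq_or_lt_of_le (h1.trans h3) with ht | ht
    -- equal tags: merge the first two intervals
    · obtain ⟨l, hl⟩ := ih u (fun i => x (i + 1)) (fun i => t (i + 1)) ε hε (by simpa [← ht])
        (h.tail (by linarith) (by linarith [h.left_lt]))
      refine ⟨l, ?_⟩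
      rw [tagSum_succ, ht]
      rw [tagSum_left f n u (x 0)] at hl
      simpa [add_comm] using hl
    · have hκ : 0 < ε / (4 * (M + 1)) := by positivity
      obtain ⟨v, hv0, hv1, hvx, hv0', hv1'⟩ := h.exists_between ht hκ
      obtain ⟨l, hl⟩ := ih v (fun i => x (i + 1)) (fun i => t (i + 1)) (ε / 2) (by linarith) hv1
        (h.tail hv1.le hv1')
      refine ⟨t 0 :: v :: l, hl.cons hu hv0 h.left_lt hv0' ?_⟩
      rw [tagSum_succ, tagSum_left f n v (x 0)]
      have e : f (t 0) * (v - u) + (tagSum f n (x 0) (fun i => x (i + 1)) (fun i => t (i + 1)) +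
          f (t (0 + 1)) * (x 0 - v)) - (f (t 0) * (x 0 - u) +
          tagSum f n (x 0) (fun i => x (i + 1)) (fun i => t (i + 1))) =
          (f (t 1) - f (t 0)) * (x 0 - v) := by
        ring
      rw [e, abs_mul]
      have hb : |f (t 1) - f (t 0)| ≤ 2 * (M + 1) := by
        have := abs_sub (f (t 1)) (f (t 0))
        linarith [hf _ (h.mem 0 (by omega)), hf _ (h.mem 1 (by omega))]
      calc |f (t 1) - f (t 0)| * |x 0 - v| ≤ 2 * (M + 1) * (ε / (4 * (M + 1))) := by gcongr
        _ = ε - ε / 2 := by field_simp; ring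

/-- Without a condition on the first tag, the error is controlled by the mesh. -/
lemma Tagged.exists_list {f : ℝ → ℝ} {a b M η : ℝ} (hM : 0 ≤ M)
    (hf : ∀ z ∈ Set.Icc a b, |f z| ≤ M) (hab : a < b) (ε : ℝ) (hε : 0 < ε) :
    ∀ (n : ℕ) (x t : ℕ → ℝ), Tagged a b η n a x t →
      ∃ l, Approx f b (2 * η) (4 * M * η + ε) (tagSum f n a x t) a l := by
  intro n
  induction n with
  | zero =>
    intro x t h
    have hl := h.left
    have hl' := h.left_lt
    have hr' := h.right_lt 0 le_rfl
    have hx : x 0 = b := h.last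
    refine ⟨[b], by simpa using hab, by simp, by simp, ?_, ?_⟩
    · intro z hz
      refine ⟨b, by simp, ?_⟩
      rw [abs_lt]
      constructor <;> linarith [hz.1, hz.2]
    · have e : riemannVal f b [a, b] - tagSum f 0 a x t = (f b - f (t 0)) * (b - a) := by
        simp [riemannVal, tagSum, hx]
        ring
      rw [e, abs_mul, abs_of_pos (sub_pos.2 hab)]
      have hb : |f b - f (t 0)| ≤ 2 * M := by
        have := abs_sub (f b) (f (t 0))
        linarith [hf b ⟨hab.le, le_rfl⟩, hf _ (h.mem 0 le_rfl)]
      calc |f b - f (t 0)| * (b - a) ≤ 2 * M * (2 * η) := by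
            gcongr
            linarith
        _ < 4 * M * η + ε := by linarith
  | succ n ih =>
    intro x t h
    have h1 := h.right 0 (by omega)
    have h3 : x 0 ≤ t 1 := h.next 0 (by omega)
    have hl := h.left
    have hl' := h.left_lt
    rcases eq_or_lt_of_le (h1.trans h3) with ht | ht
    · obtain ⟨l, hl⟩ := ih (fun i => x (i + 1)) (fun i => t (i + 1))
        (h.tail (by linarith) (by linarith [h.left_lt]))
      refine ⟨l, ?_⟩
      rw [tagSum_succ, ht]
      rw [tagSum_left f n a (x 0)] at hl
      simpa [add_comm] using hl
    · have hκ : 0 < ε / (4 * (M + 1)) := by positivity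
      obtain ⟨v, hv0, hv1, hvx, hv0', hv1'⟩ := h.exists_between ht hκ
      obtain ⟨l, hl⟩ := Tagged.exists_list_of_lt hM hf n v (fun i => x (i + 1))
        (fun i => t (i + 1)) (ε / 2) (half_pos hε) hv1 (h.tail hv1.le hv1')
      have ft0 := hf _ (h.mem 0 (by omega))
      -- any tag strictly inside `(a, v)` will do
      have hmem : (a + v) / 2 ∈ Set.Icc a b :=
        ⟨by linarith, by linarith [(h.mem 1 (by omega)).2]⟩
      refine ⟨(a + v) / 2 :: v :: l, (hl.mono (by linarith)).cons (by linarith) (by linarith)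
        (by linarith) (by linarith) ?_⟩
      rw [tagSum_succ, tagSum_left f n v (x 0)]
      have e : f ((a + v) / 2) * (v - a) +
          (tagSum f n (x 0) (fun i => x (i + 1)) (fun i => t (i + 1)) +
          f (t (0 + 1)) * (x 0 - v)) - (f (t 0) * (x 0 - a) +
          tagSum f n (x 0) (fun i => x (i + 1)) (fun i => t (i + 1))) =
          (f ((a + v) / 2) - f (t 0)) * (v - a) + (f (t 1) - f (t 0)) * (x 0 - v) := by
        ring
      rw [e]
      refine (abs_add_le _ _).trans ?_
      rw [abs_mul, abs_mul, abs_of_nonneg (show 0 ≤ v - a by linarith)]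
      have hb : |f (t 1) - f (t 0)| ≤ 2 * (M + 1) := by
        have := abs_sub (f (t 1)) (f (t 0))
        linarith [hf _ (h.mem 1 (by omega))]
      have hb' : |f ((a + v) / 2) - f (t 0)| ≤ 2 * M := by
        have := abs_sub (f ((a + v) / 2)) (f (t 0))
        linarith [hf _ hmem]
      have e1 : |f (t 1) - f (t 0)| * |x 0 - v| ≤ ε / 2 :=
        calc |f (t 1) - f (t 0)| * |x 0 - v| ≤ 2 * (M + 1) * (ε / (4 * (M + 1))) := by gcongr
          _ = ε / 2 := by field_simp; ring
      have e2 : |f ((a + v) / 2) - f (t 0)| * (v - a) ≤ 2 * M * (2 * η) := by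
        gcongr
        · linarith
        · linarith
      linarith

/-! ### The two implications -/

lemma extEq_of_riemannIntegralEq {a b : ℝ} (hab : a < b) {f : ℝ → ℝ} {A : ℝ}
    (h : RiemannIntegralEq f a b A) : ExtEq (riemannS f a b) A := by
  intro ε hε
  obtain ⟨δ, hδ, H⟩ := h ε hε
  refine ⟨δ / 4, by positivity, fun K hK => ?_⟩
  have hdense : ∀ z ∈ Set.Icc a b, ∃ k ∈ K, |z - (k : ℝ)| < δ / 4 := by
    intro z hz
    replace hK := Metric.hausdorffEDist_comm.trans_lt hK
    obtain ⟨k, hk, hkz⟩ := Metric.exists_edist_lt_of_hausdorffEDist_lt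
      (Set.mem_univ (⟨z, hz⟩ : Set.Icc a b)) hK
    refine ⟨k, hk, ?_⟩
    rw [edist_dist, ENNReal.ofReal_lt_ofReal_iff (by positivity)] at hkz
    exact hkz
  unfold riemannS
  set s : Finset ℝ := insert a (insert b (K.image Subtype.val)) with hs
  have hmem : ∀ p, p ∈ s.sort (· ≤ ·) ↔ p = a ∨ p = b ∨ ∃ k ∈ K, (k : ℝ) = p := by
    intro p
    simp [hs]
  have hIcc : ∀ p ∈ s.sort (· ≤ ·), p ∈ Set.Icc a b := by
    intro p hp
    rcases (hmem p).1 hp with rfl | rfl | ⟨k, -, rfl⟩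
    · exact ⟨le_rfl, hab.le⟩
    · exact ⟨hab.le, le_rfl⟩
    · exact k.2
  have hsorted : (s.sort (· ≤ ·)).Pairwise (· < ·) := s.sortedLT_sort.pairwise
  generalize s.sort (· ≤ ·) = L at hmem hIcc hsorted
  obtain _ | ⟨u, l⟩ := L
  · simpa using (hmem a).2 (Or.inl rfl)
  obtain rfl : u = a := by
    have ha : a ∈ u :: l := (hmem a).2 (Or.inl rfl)
    rcases List.mem_cons.1 ha with h | h
    · exact h.symm
    · have h1 := (List.pairwise_cons.1 hsorted).1 a h
      have h2 := (hIcc u (by simp)).1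
      linarith
  obtain ⟨n, x, t, hx0, hxn, hmono, hmesh, htag, hsum⟩ :=
    exists_partition_of_list f b (δ / 2) l u hsorted ((hmem b).2 (Or.inr (Or.inl rfl)))
      (fun p hp => (hIcc p hp).2) (by
        intro p hp q hq hpq hr
        have hp' := hIcc p hp
        have hq' := hIcc q hq
        -- a point of `K` near the midpoint of the gap lies outside the gap
        obtain ⟨k, hk, hkz⟩ := hdense ((p + q) / 2) ⟨by linarith [hp'.1], by linarith [hq'.2]⟩
        rw [abs_lt] at hkz
        rcases hr k ((hmem k).2 (Or.inr (Or.inr ⟨k, hk, rfl⟩))) with h | h <;>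
          linarith [hkz.1, hkz.2])
  rw [← hsum]
  exact H n x t hx0 hxn hmono (fun i hi => by linarith [hmesh i hi]) htag

/-- A dense strictly increasing list from `a` to `b` is the sorted list of a finite subset of
`[a, b]` close to `[a, b]`. -/
lemma exists_finset_of_list {a b η δ : ℝ} (hab : a < b) (hηδ : η < δ) (f : ℝ → ℝ) (l : List ℝ)
    (hs : (a :: l).Pairwise (· < ·)) (hb : b ∈ l) (hle : ∀ p ∈ l, p ≤ b)
    (hd : ∀ z ∈ Set.Icc a b, ∃ p ∈ l, |z - p| < η) :
    ∃ K : Finset (Set.Icc a b),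
      EMetric.hausdorffEdist (K : Set (Set.Icc a b)) Set.univ < ENNReal.ofReal δ ∧
      riemannS f a b K = riemannVal f b (a :: l) := by
  classical
  have hal := (List.pairwise_cons.1 hs).1
  have hη : 0 < η := by
    obtain ⟨p, -, hp⟩ := hd a ⟨le_rfl, hab.le⟩
    exact (abs_nonneg _).trans_lt hp
  refine ⟨(a :: l).toFinset.subtype (· ∈ Set.Icc a b), ?_, ?_⟩
  · refine lt_of_le_of_lt (b := ENNReal.ofReal η) ?_
      ((ENNReal.ofReal_lt_ofReal_iff (hη.trans hηδ)).2 hηδ)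
    refine Metric.hausdorffEDist_le_of_mem_edist (fun z _ => ⟨z, Set.mem_univ _, by simp⟩) ?_
    rintro ⟨z, hz⟩ -
    obtain ⟨p, hp, hpz⟩ := hd z hz
    refine ⟨⟨p, (hal p hp).le, hle p hp⟩, by simp [hp], ?_⟩
    rw [edist_dist]
    exact ENNReal.ofReal_le_ofReal hpz.le
  · have hset : insert a (insert b (((a :: l).toFinset.subtype (· ∈ Set.Icc a b)).image
        Subtype.val)) = (a :: l).toFinset := by
      ext p
      simp only [Finset.mem_insert, Finset.mem_image, Finset.mem_subtype, List.mem_toFinset,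
        List.mem_cons]
      constructor
      · rintro (rfl | rfl | ⟨q, hq, rfl⟩)
        · exact Or.inl rfl
        · exact Or.inr hb
        · exact hq
      · rintro (rfl | hp)
        · exact Or.inl rfl
        · exact Or.inr (Or.inr ⟨⟨p, (hal p hp).le, hle p hp⟩, Or.inr hp, rfl⟩)
    unfold riemannS
    rw [hset, (List.toFinset_sort (· ≤ ·) (hs.imp fun h => h.ne)).2 (hs.imp fun h => h.le)]

lemma riemannIntegralEq_of_extEq {a b : ℝ} (hab : a < b) {f : ℝ → ℝ} {M : ℝ}
    (hf : ∀ z ∈ Set.Icc a b, |f z| ≤ M) {A : ℝ} (h : ExtEq (riemannS f a b) A) :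
    RiemannIntegralEq f a b A := by
  have hM : 0 ≤ M := (abs_nonneg _).trans (hf a ⟨le_rfl, hab.le⟩)
  intro ε hε
  obtain ⟨δ, hδ, H⟩ := h (ε / 2) (by positivity)
  -- `η < δ / 2` makes the list `δ`-dense, `4 * M * η ≤ ε / 4` controls the first tag
  obtain ⟨η, hη, hηm⟩ : ∃ η, 0 < η ∧ η < min (δ / 2) (ε / (16 * (M + 1))) :=
    _root_.exists_between (by positivity)
  obtain ⟨hηδ, hηε⟩ := lt_min_iff.1 hηm
  rw [lt_div_iff₀ (by positivity)] at hηε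
  refine ⟨η, hη, fun n x t hx0 hxn hmono hmesh htag => ?_⟩
  obtain _ | n := n
  · linarith
  have hle : ∀ i j, i ≤ j → j ≤ n + 1 → x i ≤ x j := by
    intro i j hij
    induction j, hij using Nat.le_induction with
    | base => exact fun _ => le_rfl
    | succ j _ ih => exact fun hj => (ih (by omega)).trans (hmono j (by omega))
  have hT : Tagged a b η n a (fun i => x (i + 1)) t :=
    { left := hx0 ▸ (htag 0 (by omega)).1
      left_lt := by
        linarith [hmesh 0 (by omega), (htag 0 (by omega)).2]
      right := fun i hi => (htag i (by omega)).2
      right_lt := fun i hi => by linarith [hmesh i (by omega), (htag i (by omega)).1]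
      next := fun i hi => (htag (i + 1) (by omega)).1
      next_lt := fun i hi => by
        linarith [hmesh (i + 1) (by omega), (htag (i + 1) (by omega)).2]
      last := hxn
      mem := fun i hi =>
        ⟨by linarith [hle 0 i (by omega) (by omega), (htag i (by omega)).1],
          by linarith [hle (i + 1) (n + 1) (by omega) le_rfl, (htag i (by omega)).2]⟩ }
  obtain ⟨l, hs, hb, hlb, hd, hv⟩ := Tagged.exists_list hM hf hab (ε / 4) (by positivity) n _ t hT
  obtain ⟨K, hK, hKv⟩ := exists_finset_of_list (δ := δ) hab (by linarith) f l hs hb hlb hd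
  have hKA := H K hK
  have hS : tagSum f n a (fun i => x (i + 1)) t =
      ∑ i ∈ Finset.range (n + 1), f (t i) * (x (i + 1) - x i) := by
    rw [Finset.sum_range_succ', hx0, tagSum, add_comm]
  rw [hKv] at hKA
  rw [hS] at hv
  rw [abs_lt] at hv hKA ⊢
  constructor <;> linarith [hv.1, hv.2, hKA.1, hKA.2]

/-- for a bounded `f : [a,b] → ℝ`, `∫_a^b f = A` (Riemann) iff
`ext(s, [a,b]) = A` with `s` as above. -/
theorem stmt_10 (a b : ℝ) (hab : a < b) (f : ℝ → ℝ)
    (hbdd : ∃ M : ℝ, ∀ x ∈ Set.Icc a b, |f x| ≤ M) (A : ℝ) :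
    RiemannIntegralEq f a b A ↔ ExtEq (riemannS f a b) A := by
  obtain ⟨M, hM⟩ := hbdd
  exact ⟨extEq_of_riemannIntegralEq hab, riemannIntegralEq_of_extEq hab hM⟩
end

section
/- Let C ⊆ ℝ be the ternary Cantor set with the usual metric, and for finite nonempty K ⊆ C let s(K) be the arithmetic mean of the elements of K. Then ext_str(s,C) does not exist: there is no A ∈ ℝ such that for every ε > 0 there is δ > 0 with |s(K) − A| < ε for all finite stretched K ⊆ C with d_H(K,C) < δ. -/
/-- The ternary Cantor set: reals having a base-3 expansion using only digits 0 and 2. -/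
def CantorSet : Set ℝ :=
  {x : ℝ | ∃ d : ℕ → ℝ, (∀ n, d n = 0 ∨ d n = 2) ∧ x = ∑' n : ℕ, d n / 3 ^ (n + 1)}

/-- The set of this file agrees with Mathlib's ternary Cantor set. -/
lemma CantorSet_eq_cantorSet : CantorSet = cantorSet := by
  rw [cantorSet_eq_zero_two_ofDigits]
  ext x
  constructor
  · rintro ⟨d, hd, rfl⟩
    refine ⟨fun n => if d n = 0 then 0 else 2, fun n => by dsimp only; split_ifs <;> decide, ?_⟩
    unfold Real.ofDigits
    refine tsum_congr fun n => ?_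
    rcases hd n with h | h <;> simp [Real.ofDigitsTerm, h, div_eq_mul_inv]
  · rintro ⟨a, ha, rfl⟩
    refine ⟨fun n => ((a n : ℕ) : ℝ), fun n => ?_, ?_⟩
    · have h := ha n
      dsimp only
      generalize a n = y at h ⊢
      fin_cases y <;> simp at h ⊢
    · unfold Real.ofDigits
      refine tsum_congr fun n => ?_
      simp [Real.ofDigitsTerm, div_eq_mul_inv]

lemma one_mem_cantorSet : (1 : ℝ) ∈ cantorSet := by
  refine Set.mem_iInter.mpr fun n => ?_
  induction n with
  | zero => simp
  | succ n ih => exact Or.inr ⟨1, ih, by norm_num⟩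

lemma div_three_mem {x : ℝ} (hx : x ∈ cantorSet) : x / 3 ∈ cantorSet := by
  rw [cantorSet_eq_union_halves]
  exact Or.inl ⟨x, hx, rfl⟩

lemma two_add_div_three_mem {x : ℝ} (hx : x ∈ cantorSet) : (2 + x) / 3 ∈ cantorSet := by
  rw [cantorSet_eq_union_halves]
  exact Or.inr ⟨x, hx, rfl⟩

/-- `P` is an `r`-separated subset of the Cantor set whose closed `r`-neighbourhood covers it. -/
structure IsNet (P : Finset ℝ) (r : ℝ) : Prop where
  mem : ∀ x ∈ P, x ∈ cantorSet
  sep : ∀ x ∈ P, ∀ y ∈ P, x ≠ y → r ≤ |x - y|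
  cover : ∀ c ∈ cantorSet, ∃ x ∈ P, |c - x| ≤ r

/-- A scaled copy of `P` in the left half of the Cantor set and one of `Q` in the right half. -/
noncomputable def join (P Q : Finset ℝ) : Finset ℝ :=
  P.image (fun x => x / 3) ∪ Q.image (fun x => (2 + x) / 3)

lemma mem_join {P Q : Finset ℝ} {x : ℝ} :
    x ∈ join P Q ↔ (∃ y ∈ P, y / 3 = x) ∨ ∃ y ∈ Q, (2 + y) / 3 = x := by
  simp [join]

lemma IsNet.join {P Q : Finset ℝ} {r : ℝ} (hP : IsNet P r) (hQ : IsNet Q r) (hr : r ≤ 1) :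
    IsNet (join P Q) (r / 3) := by
  have key : ∀ u v : ℝ, r ≤ |u - v| → r / 3 ≤ |u / 3 - v / 3| := fun u v h => by
    rw [← sub_div, abs_div, abs_of_pos (by norm_num : (0 : ℝ) < 3)]
    linarith
  have key' : ∀ u v : ℝ, |u - v| ≤ r → |u / 3 - v / 3| ≤ r / 3 := fun u v h => by
    rw [← sub_div, abs_div, abs_of_pos (by norm_num : (0 : ℝ) < 3)]
    linarith
  have shift : ∀ u v : ℝ, (2 + u) / 3 - (2 + v) / 3 = u / 3 - v / 3 := fun u v => by ring
  refine ⟨?_, ?_, ?_⟩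
  · intro x hx
    rcases mem_join.1 hx with ⟨y, hy, rfl⟩ | ⟨y, hy, rfl⟩
    · exact div_three_mem (hP.mem y hy)
    · exact two_add_div_three_mem (hQ.mem y hy)
  · intro x hx y hy hxy
    rcases mem_join.1 hx with ⟨u, hu, rfl⟩ | ⟨u, hu, rfl⟩ <;>
    rcases mem_join.1 hy with ⟨v, hv, rfl⟩ | ⟨v, hv, rfl⟩
    · exact key u v (hP.sep u hu v hv fun h => hxy (by rw [h]))
    · have h1 := cantorSet_subset_unitInterval (hP.mem u hu)
      have h2 := cantorSet_subset_unitInterval (hQ.mem v hv)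
      exact le_abs.2 (Or.inr (by linarith [h1.2, h2.1]))
    · have h1 := cantorSet_subset_unitInterval (hQ.mem u hu)
      have h2 := cantorSet_subset_unitInterval (hP.mem v hv)
      exact le_abs.2 (Or.inl (by linarith [h1.1, h2.2]))
    · rw [shift]
      exact key u v (hQ.sep u hu v hv fun h => hxy (by rw [h]))
  · intro c hc
    rw [cantorSet_eq_union_halves] at hc
    rcases hc with ⟨d, hd, rfl⟩ | ⟨d, hd, rfl⟩
    · obtain ⟨x, hx, h⟩ := hP.cover d hd
      exact ⟨x / 3, mem_join.2 (Or.inl ⟨x, hx, rfl⟩), key' d x h⟩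
    · obtain ⟨x, hx, h⟩ := hQ.cover d hd
      refine ⟨(2 + x) / 3, mem_join.2 (Or.inr ⟨x, hx, rfl⟩), ?_⟩
      simp only [shift]
      exact key' d x h

lemma IsNet.disjoint_halves {P Q : Finset ℝ} {r : ℝ} (hP : IsNet P r) (hQ : IsNet Q r) :
    Disjoint (P.image (fun x => x / 3)) (Q.image (fun x => (2 + x) / 3)) := by
  rw [Finset.disjoint_left]
  intro x hx hy
  obtain ⟨u, hu, rfl⟩ := Finset.mem_image.1 hx
  obtain ⟨v, hv, h⟩ := Finset.mem_image.1 hy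
  have h1 := cantorSet_subset_unitInterval (hP.mem u hu)
  have h2 := cantorSet_subset_unitInterval (hQ.mem v hv)
  linarith [h1.2, h2.1]

lemma IsNet.card_join {P Q : Finset ℝ} {r : ℝ} (hP : IsNet P r) (hQ : IsNet Q r) :
    (_root_.join P Q).card = P.card + Q.card := by
  rw [_root_.join, Finset.card_union_of_disjoint (hP.disjoint_halves hQ),
    Finset.card_image_of_injective, Finset.card_image_of_injective] <;>
  · intro x y h
    simp only at h
    linarith

lemma IsNet.sum_join {P Q : Finset ℝ} {r : ℝ} (hP : IsNet P r) (hQ : IsNet Q r) :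
    ∑ x ∈ _root_.join P Q, x = (∑ x ∈ P, x) / 3 + (2 * Q.card + ∑ x ∈ Q, x) / 3 := by
  rw [_root_.join, Finset.sum_union (hP.disjoint_halves hQ), Finset.sum_image, Finset.sum_image,
    ← Finset.sum_div, ← Finset.sum_div, Finset.sum_add_distrib]
  · simp [mul_comm]
  all_goals
    intro x _ y _ h
    simp only at h
    linarith

lemma scale_le_one (n : ℕ) : (2 / 3 / 3 ^ n : ℝ) ≤ 1 := by
  have h : (1 : ℝ) ≤ 3 ^ n := one_le_pow₀ (by norm_num)
  rw [div_le_one (by positivity)]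
  linarith

lemma scale_succ (n : ℕ) : (2 / 3 / 3 ^ (n + 1) : ℝ) = 2 / 3 / 3 ^ n / 3 := by
  rw [pow_succ, div_div (2 / 3 : ℝ)]

/-- The endpoints of the `2 ^ n` basic intervals of length `3 ^ (-n)`. -/
lemma exists_dense_net (n : ℕ) : ∃ Q : Finset ℝ, IsNet Q (2 / 3 / 3 ^ n) ∧
    Q.card = 2 * 2 ^ n ∧ ∑ x ∈ Q, x = 2 ^ n := by
  induction n with
  | zero =>
    refine ⟨{0, 1}, ⟨?_, ?_, ?_⟩, ?_, ?_⟩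
    · intro x hx
      rcases Finset.mem_insert.1 hx with rfl | hx
      · exact zero_mem_cantorSet
      · rw [Finset.mem_singleton.1 hx]
        exact one_mem_cantorSet
    · intro x hx y hy hxy
      simp only [Finset.mem_insert, Finset.mem_singleton] at hx hy
      rcases hx with rfl | rfl <;> rcases hy with rfl | rfl <;> first | exact absurd rfl hxy | norm_num
    · intro c hc
      have h := cantorSet_subset_unitInterval hc
      rcases le_total c (1 / 2) with hc' | hc'
      · exact ⟨0, by simp, abs_le.2 ⟨by linarith [h.1], by linarith [h.1]⟩⟩
      · exact ⟨1, by simp, abs_le.2 ⟨by linarith [h.2], by linarith [h.2]⟩⟩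
    · simp
    · simp
  | succ n ih =>
    obtain ⟨Q, hQ, hc, hs⟩ := ih
    refine ⟨join Q Q, ?_, ?_, ?_⟩
    · rw [scale_succ]
      exact hQ.join hQ (scale_le_one n)
    · rw [hQ.card_join hQ, hc]
      ring
    · rw [hQ.sum_join hQ, hs, hc]
      push_cast
      ring

/-- One interior point of each of the `2 ^ n` basic intervals of length `3 ^ (-n)`. -/
lemma exists_sparse_net (n : ℕ) : ∃ P : Finset ℝ, IsNet P (2 / 3 / 3 ^ n) ∧ P.card = 2 ^ n := by
  induction n with
  | zero =>
    refine ⟨{1 / 3}, ⟨?_, ?_, ?_⟩, by simp⟩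
    · intro x hx
      rw [Finset.mem_singleton.1 hx]
      exact div_three_mem one_mem_cantorSet
    · intro x hx y hy hxy
      rw [Finset.mem_singleton.1 hx, Finset.mem_singleton.1 hy] at hxy
      exact absurd rfl hxy
    · intro c hc
      have h := cantorSet_subset_unitInterval hc
      exact ⟨1 / 3, by simp, abs_le.2 ⟨by linarith [h.1], by linarith [h.2]⟩⟩
  | succ n ih =>
    obtain ⟨P, hP, hc⟩ := ih
    refine ⟨join P P, ?_, ?_⟩
    · rw [scale_succ]
      exact hP.join hP (scale_le_one n)
    · rw [hP.card_join hP, hc]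
      ring

/-- Nets, viewed as subsets of the space `CantorSet`, are among the sets over which the stretched
extension takes its limit. -/
lemma IsNet.exists_stretched {P : Finset ℝ} {r : ℝ} (hP : IsNet P r) :
    ∃ K : Finset ↥CantorSet, IsStretched K ∧
      EMetric.hausdorffEdist (K : Set ↥CantorSet) Set.univ ≤ ENNReal.ofReal r ∧
      K.card = P.card ∧ ∑ k ∈ K, (k : ℝ) = ∑ x ∈ P, x := by
  classical
  have hmem : ∀ x ∈ P, x ∈ CantorSet := fun x hx => CantorSet_eq_cantorSet ▸ hP.mem x hx
  have hd : EMetric.hausdorffEdist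
      ((P.subtype (· ∈ CantorSet) : Finset ↥CantorSet) : Set ↥CantorSet) Set.univ
      ≤ ENNReal.ofReal r := by
    refine Metric.hausdorffEDist_le_of_mem_edist ?_ ?_
    · intro x _
      exact ⟨x, Set.mem_univ _, by simp⟩
    · rintro ⟨c, hc⟩ _
      obtain ⟨x, hx, h⟩ := hP.cover c (CantorSet_eq_cantorSet ▸ hc)
      refine ⟨⟨x, hmem x hx⟩, by simpa using hx, ?_⟩
      rw [edist_dist]
      exact ENNReal.ofReal_le_ofReal h
  refine ⟨P.subtype (· ∈ CantorSet), ?_, hd, ?_, ?_⟩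
  · intro x hx y hy hxy
    refine hd.trans ?_
    rw [edist_dist]
    exact ENNReal.ofReal_le_ofReal (hP.sep x (Finset.mem_subtype.1 hx) y (Finset.mem_subtype.1 hy)
      fun h => hxy (Subtype.ext h))
  · rw [Finset.card_subtype, Finset.filter_true_of_mem hmem]
  · exact Finset.sum_subtype_of_mem (fun x : ℝ => x) hmem

/-- with `s(K)` the arithmetic mean of the elements of `K`, the
stretched extension `ext_str(s, C)` over the ternary Cantor set `C` does not exist. -/
theorem stmt_11 :
    ¬ ∃ A : ℝ, ExtStrEq
      (fun K : Finset ↥CantorSet => (∑ k ∈ K, (k : ℝ)) / (K.card : ℝ)) A := by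
  rintro ⟨A, hA⟩
  -- `1/36` is half of the gap `5/9 - 1/2`
  obtain ⟨δ, hδ, h⟩ := hA (1 / 36) (by norm_num)
  have net : ∀ {P : Finset ℝ} {r : ℝ}, IsNet P r → r < δ →
      |(∑ x ∈ P, x) / (P.card : ℝ) - A| < 1 / 36 := by
    intro P r hP hr
    obtain ⟨K, hK, hd, hc, hs⟩ := hP.exists_stretched
    have := h K hK (hd.trans_lt ((ENNReal.ofReal_lt_ofReal_iff hδ).2 hr))
    simpa only [hc, hs] using this
  obtain ⟨n, hn⟩ : ∃ n : ℕ, (2 / 3 / 3 ^ n : ℝ) < δ := by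
    obtain ⟨n, hn⟩ := exists_pow_lt_of_lt_one hδ (by norm_num : (1 / 3 : ℝ) < 1)
    refine ⟨n, ?_⟩
    have h0 : (0 : ℝ) < (1 / 3) ^ n := by positivity
    have : (2 / 3 / 3 ^ n : ℝ) = 2 / 3 * (1 / 3) ^ n := by
      rw [one_div, inv_pow, div_eq_mul_inv]
    linarith
  obtain ⟨Q, hQ, hQc, hQs⟩ := exists_dense_net n
  obtain ⟨P, hP, hPc⟩ := exists_sparse_net n
  have h1 := net hQ hn
  have h2 := net (hP.join hQ (scale_le_one n))
    (by have : (0 : ℝ) < 2 / 3 / 3 ^ n := by positivity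
        linarith)
  have hpos : (0 : ℝ) < 2 ^ n := by positivity
  have e1 : (∑ x ∈ Q, x) / (Q.card : ℝ) = 1 / 2 := by
    rw [hQs, hQc]
    push_cast
    field_simp
  have e2 : 5 / 9 ≤ (∑ x ∈ join P Q, x) / ((join P Q).card : ℝ) := by
    have hP0 : 0 ≤ ∑ x ∈ P, x :=
      Finset.sum_nonneg fun x hx => (cantorSet_subset_unitInterval (hP.mem x hx)).1
    rw [hP.sum_join hQ, hP.card_join hQ, hPc, hQc, hQs]
    push_cast
    rw [le_div_iff₀ (by positivity)]
    linarith
  rw [e1] at h1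
  linarith [(abs_lt.1 h1).1, (abs_lt.1 h2).2]
end

section
/- Let (I,d) be a totally bounded pseudo-metric space and s a real-valued function on the finite subsets of I. If s is uniformly continuous with respect to the Hausdorff pseudo-metric on the finite subsets of I (i.e. for every ε > 0 there is δ > 0 such that finite K, L ⊆ I with d_H(K,L) < δ satisfy |s(K) − s(L)| < ε), then there exists A ∈ ℝ with ext(s,I) = A. -/
/-- if `s` is uniformly continuous w.r.t. the Hausdorff pseudo-metric
on finite subsets of a totally bounded pseudo-metric space, then `ext(s,I)` exists. -/
theorem stmt_12 {I : Type*} [PseudoMetricSpace I]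
    (htb : ∀ δ : ℝ, 0 < δ → ∃ K : Finset I, ∀ x : I, ∃ k ∈ K, dist k x < δ)
    (s : Finset I → ℝ)
    (hunif : ∀ ε : ℝ, 0 < ε → ∃ δ : ℝ, 0 < δ ∧ ∀ K L : Finset I,
      EMetric.hausdorffEdist (K : Set I) (L : Set I) < ENNReal.ofReal δ →
      |s K - s L| < ε) :
    ∃ A : ℝ, ExtEq s A := by
  have hF : (Filter.comap
      (fun K : Finset I ↦ EMetric.hausdorffEdist (K : Set I) (Set.univ : Set I))
      (nhds 0)).HasBasis (fun δ : ℝ ↦ 0 < δ)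
      (fun δ ↦ {K | EMetric.hausdorffEdist (K : Set I) (Set.univ : Set I) <
        ENNReal.ofReal δ}) := by
    refine (ENNReal.nhds_zero_basis.comap _).to_hasBasis (fun a ha ↦ ?_) (fun δ hδ ↦ ?_)
    · obtain ⟨r, -, hr0, hra⟩ := ENNReal.lt_iff_exists_real_btwn.mp ha
      exact ⟨r, ENNReal.ofReal_pos.mp hr0, fun K hK ↦ lt_trans hK hra⟩
    · exact ⟨ENNReal.ofReal δ, ENNReal.ofReal_pos.mpr hδ, subset_rfl⟩
  have hne : (Filter.comap
      (fun K : Finset I ↦ EMetric.hausdorffEdist (K : Set I) (Set.univ : Set I))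
      (nhds 0)).NeBot := by
    refine hF.neBot_iff.mpr fun {δ} hδ ↦ ?_
    obtain ⟨K, hK⟩ := htb (δ / 2) (half_pos hδ)
    -- The net has radius `δ / 2` because the Hausdorff distance is only bounded non-strictly by it.
    refine ⟨K, lt_of_le_of_lt (Metric.hausdorffEDist_le_of_mem_edist
      (r := ENNReal.ofReal (δ / 2)) (fun x _ ↦ ⟨x, Set.mem_univ x, by simp⟩) fun x _ ↦ ?_)
      ((ENNReal.ofReal_lt_ofReal_iff hδ).mpr (half_lt_self hδ))⟩
    obtain ⟨k, hk, hkx⟩ := hK x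
    refine ⟨k, hk, ?_⟩
    rw [edist_comm, edist_dist]
    exact ENNReal.ofReal_le_ofReal hkx.le
  have hcauchy : Cauchy (Filter.map s (Filter.comap
      (fun K : Finset I ↦ EMetric.hausdorffEdist (K : Set I) (Set.univ : Set I))
      (nhds 0))) := by
    refine Metric.cauchy_iff.mpr ⟨hne.map s, fun ε hε ↦ ?_⟩
    obtain ⟨δ, hδ, h⟩ := hunif ε hε
    refine ⟨_, Filter.image_mem_map (hF.mem_of_mem (half_pos hδ)), ?_⟩
    rintro _ ⟨K, hK, rfl⟩ _ ⟨L, hL, rfl⟩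
    refine h K L (lt_of_le_of_lt (Metric.hausdorffEDist_triangle (t := Set.univ)) ?_)
    rw [Metric.hausdorffEDist_comm (s := Set.univ), ← add_halves δ,
      ENNReal.ofReal_add (half_pos hδ).le (half_pos hδ).le]
    exact ENNReal.add_lt_add hK hL
  obtain ⟨A, hA⟩ := CompleteSpace.complete hcauchy
  refine ⟨A, fun ε hε ↦ ?_⟩
  obtain ⟨δ, hδ, h⟩ := hF.mem_iff.mp (hA (Metric.ball_mem_nhds A hε))
  exact ⟨δ, hδ, fun K hK ↦ h hK⟩
end

section
/- Let (I,d) be a totally bounded pseudo-metric space, let s and s_n (n ∈ ℕ) be real-valued functions on the finite subsets of I, and suppose s_n → s uniformly in the following weak sense: for every ε > 0 there exist δ > 0 and N ∈ ℕ such that n > N, K ⊆ I finite and d_H(K,I) < δ imply |s_n(K) − s(K)| < ε. Suppose ext(s_n,I) exists and is finite for each n ∈ ℕ. Then lim_{n→∞} ext(s_n,I) exists, ext(s,I) exists, and ext(s,I) = lim_{n→∞} ext(s_n,I). -/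
/-- In a totally bounded space there are finite sets arbitrarily close to the whole space. -/
theorem exists_hausdorffEdist_lt {I : Type*} [PseudoMetricSpace I]
    (htb : ∀ δ : ℝ, 0 < δ → ∃ K : Finset I, ∀ x : I, ∃ k ∈ K, dist k x < δ)
    {δ : ℝ} (hδ : 0 < δ) :
    ∃ K : Finset I,
      EMetric.hausdorffEdist (K : Set I) (Set.univ : Set I) < ENNReal.ofReal δ := by
  obtain ⟨K, hK⟩ := htb (δ / 2) (half_pos hδ)
  -- Nets of radius `δ / 2` turn the non-strict bound on the supremum into a strict one.
  refine ⟨K, lt_of_le_of_lt (b := ENNReal.ofReal (δ / 2)) ?_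
    ((ENNReal.ofReal_lt_ofReal_iff hδ).2 (half_lt_self hδ))⟩
  refine Metric.hausdorffEDist_le_of_mem_edist (fun x _ => ⟨x, Set.mem_univ x, by simp⟩)
    (fun x _ => ?_)
  obtain ⟨k, hk, hkx⟩ := hK x
  refine ⟨k, hk, ?_⟩
  rw [edist_dist, dist_comm]
  exact ENNReal.ofReal_le_ofReal hkx.le

/-- if `sₙ → s` uniformly in the weak sense and each `ext(sₙ,I) = Aₙ`
exists (finite), then `lim Aₙ` exists, `ext(s,I)` exists, and they are equal. -/
theorem stmt_14 {I : Type*} [PseudoMetricSpace I]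
    (htb : ∀ δ : ℝ, 0 < δ → ∃ K : Finset I, ∀ x : I, ∃ k ∈ K, dist k x < δ)
    (s : Finset I → ℝ) (sn : ℕ → Finset I → ℝ)
    (hconv : ∀ ε : ℝ, 0 < ε → ∃ δ : ℝ, 0 < δ ∧ ∃ N : ℕ, ∀ n > N, ∀ K : Finset I,
      EMetric.hausdorffEdist (K : Set I) (Set.univ : Set I) < ENNReal.ofReal δ →
      |sn n K - s K| < ε)
    (An : ℕ → ℝ) (hAn : ∀ n : ℕ, ExtEq (sn n) (An n)) :
    ∃ A : ℝ, Filter.Tendsto An Filter.atTop (nhds A) ∧ ExtEq s A := by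
  have hcauchy : CauchySeq An := by
    refine Metric.cauchySeq_iff.2 fun ε hε => ?_
    obtain ⟨δ, hδ, N, hN⟩ := hconv (ε / 4) (by positivity)
    refine ⟨N + 1, fun m hm n hn => ?_⟩
    obtain ⟨δm, hδm, hm'⟩ := hAn m (ε / 4) (by positivity)
    obtain ⟨δn, hδn, hn'⟩ := hAn n (ε / 4) (by positivity)
    obtain ⟨K, hK⟩ := exists_hausdorffEdist_lt htb (lt_min hδ (lt_min hδm hδn))
    have hK₀ := hK.trans_le (ENNReal.ofReal_le_ofReal (min_le_left _ _))
    have hK₁ := hK.trans_le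
      (ENNReal.ofReal_le_ofReal ((min_le_right _ _).trans (min_le_left _ _)))
    have hK₂ := hK.trans_le
      (ENNReal.ofReal_le_ofReal ((min_le_right _ _).trans (min_le_right _ _)))
    have h₁ := abs_lt.1 (hN m (by omega) K hK₀)
    have h₂ := abs_lt.1 (hN n (by omega) K hK₀)
    have h₃ := abs_lt.1 (hm' K hK₁)
    have h₄ := abs_lt.1 (hn' K hK₂)
    rw [Real.dist_eq, abs_lt]
    constructor <;> linarith
  obtain ⟨A, hA⟩ := cauchySeq_tendsto_of_complete hcauchy
  refine ⟨A, hA, fun ε hε => ?_⟩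
  obtain ⟨δ, hδ, N, hN⟩ := hconv (ε / 3) (by positivity)
  obtain ⟨M, hM⟩ := Metric.tendsto_atTop.1 hA (ε / 3) (by positivity)
  -- A single index beyond both thresholds suffices; the final `δ` may depend on it.
  obtain ⟨n, hnN, hnM⟩ : ∃ n, N < n ∧ M ≤ n := ⟨N + 1 + M, by omega, by omega⟩
  obtain ⟨δn, hδn, hn⟩ := hAn n (ε / 3) (by positivity)
  refine ⟨min δ δn, lt_min hδ hδn, fun K hK => ?_⟩
  have h₁ := abs_lt.1 (hN n hnN K
    (hK.trans_le (ENNReal.ofReal_le_ofReal (min_le_left _ _))))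
  have h₂ := abs_lt.1 (hn K (hK.trans_le (ENNReal.ofReal_le_ofReal (min_le_right _ _))))
  have h₃ := hM n hnM
  rw [Real.dist_eq, abs_lt] at h₃
  rw [abs_lt]
  constructor <;> linarith
end

section
/- Let (I,d) be a totally bounded pseudo-metric space, let I_1 be a dense subspace of I, let s be a real-valued function on the finite subsets of I, and let s_1 be its restriction to the finite subsets of I_1. If ext(s,I) = A ∈ ℝ exists, then ext(s_1,I_1) exists and equals A. -/
/-- `ext` of (the restriction of) `s` on the subspace `J ⊆ I`. -/
def ExtOnEq {I : Type*} [PseudoMetricSpace I] (J : Set I) (s : Finset I → ℝ)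
    (A : ℝ) : Prop :=
  ∀ ε : ℝ, 0 < ε → ∃ δ : ℝ, 0 < δ ∧ ∀ K : Finset I, (K : Set I) ⊆ J →
    EMetric.hausdorffEdist (K : Set I) J < ENNReal.ofReal δ →
    |s K - A| < ε

/-- if `I₁` is a dense subspace of `I` and `ext(s,I) = A`, then the
extension of the restriction `s₁ = s|_{I₁}` onto `I₁` exists and equals `A`. -/
theorem stmt_16 {I : Type*} [PseudoMetricSpace I]
    (htb : ∀ δ : ℝ, 0 < δ → ∃ K : Finset I, ∀ x : I, ∃ k ∈ K, dist k x < δ)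
    (I₁ : Set I) (hdense : Dense I₁)
    (s : Finset I → ℝ) (A : ℝ) (h : ExtEq s A) :
    ExtOnEq I₁ s A := by
  intro ε hε
  obtain ⟨δ, hδ, hK⟩ := h ε hε
  refine ⟨δ, hδ, fun K _ hd => hK K ?_⟩
  -- The Hausdorff distance does not distinguish a set from its closure, so `K` is exactly as far
  -- from `I₁` as from `closure I₁ = univ`, and the same `δ` works for `I₁`.
  rw [← hdense.closure_eq]
  exact (Metric.hausdorffEDist_closure_right).trans_lt hd
end

section
/- Let (I,d) be a totally bounded pseudo-metric space and s a real-valued function on the finite subsets of I that is increasing, i.e. s(K) ≤ s(L) whenever K ⊆ L are finite subsets of I. If ext(s,I) = A ∈ ℝ exists, then A = sup{s(K) : K ⊆ I finite}. -/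
/-- Adjoining a sufficiently fine finite net to `K` gives a finite set that is Hausdorff-close to
the whole space, so its value under `s` is close to `ext(s,I)`. -/
lemma exists_superset_abs_sub_lt {I : Type*} [PseudoMetricSpace I]
    (htb : ∀ δ : ℝ, 0 < δ → ∃ K : Finset I, ∀ x : I, ∃ k ∈ K, dist k x < δ)
    {s : Finset I → ℝ} {A : ℝ} (hext : ExtEq s A) (K : Finset I) {ε : ℝ} (hε : 0 < ε) :
    ∃ L : Finset I, K ⊆ L ∧ |s L - A| < ε := by
  classical
  obtain ⟨δ, hδ, h⟩ := hext ε hε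
  obtain ⟨N, hN⟩ := htb (δ / 2) (half_pos hδ)
  refine ⟨K ∪ N, Finset.subset_union_left, h _ ?_⟩
  -- The net has mesh `δ / 2` so that the Hausdorff distance, an infimum, is strictly below `δ`.
  refine lt_of_le_of_lt (b := ENNReal.ofReal (δ / 2)) ?_
    ((ENNReal.ofReal_lt_ofReal_iff hδ).2 (half_lt_self hδ))
  refine Metric.hausdorffEDist_le_of_mem_edist
    (fun x _ => ⟨x, Set.mem_univ x, by simp⟩) (fun x _ => ?_)
  obtain ⟨k, hk, hkx⟩ := hN x
  refine ⟨k, by simp [hk], ?_⟩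
  rw [edist_comm, edist_dist]
  exact ENNReal.ofReal_le_ofReal hkx.le

/-- if `s` is increasing and `ext(s,I) = A` exists, then
`A = sup{s(K) : K ⊆ I finite}`. -/
theorem stmt_17 {I : Type*} [PseudoMetricSpace I]
    (htb : ∀ δ : ℝ, 0 < δ → ∃ K : Finset I, ∀ x : I, ∃ k ∈ K, dist k x < δ)
    (s : Finset I → ℝ)
    (hmono : ∀ K L : Finset I, K ⊆ L → s K ≤ s L)
    (A : ℝ) (hext : ExtEq s A) :
    IsLUB (Set.range s) A := by
  constructor
  · rintro _ ⟨K, rfl⟩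
    refine le_of_forall_pos_le_add fun ε hε => ?_
    obtain ⟨L, hKL, hL⟩ := exists_superset_abs_sub_lt htb hext K hε
    linarith [hmono K L hKL, (abs_lt.1 hL).2]
  · intro B hB
    refine le_of_forall_pos_le_add fun ε hε => ?_
    obtain ⟨L, -, hL⟩ := exists_superset_abs_sub_lt htb hext ∅ hε
    linarith [hB (Set.mem_range_self L), (abs_lt.1 hL).1]
end

section
/- Let (I,d) be a totally bounded pseudo-metric space and s a real-valued function on the finite subsets of I that is d-increasing, i.e. for every ε > 0 and every finite K ⊆ I there is δ > 0 such that every finite L ⊆ I with d_H(L,I) < δ satisfies s(K) − ε < s(L). If S = sup{s(K) : K ⊆ I finite} is finite then ext(s,I) exists and equals S; and if S = +∞ then ext(s,I) = +∞, i.e. for every l ∈ ℝ there is δ > 0 such that every finite L ⊆ I with d_H(L,I) < δ satisfies s(L) > l. -/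
/-- if `s` is d-increasing then its extension exists and equals
`S = sup{s(K) : K finite}`: when `S` is finite (i.e. the range of `s` is bounded
above), `ext(s,I) = S`; when `S = +∞`, `ext(s,I) = +∞`. -/
theorem stmt_18 {I : Type*} [PseudoMetricSpace I]
    (htb : ∀ δ : ℝ, 0 < δ → ∃ K : Finset I, ∀ x : I, ∃ k ∈ K, dist k x < δ)
    (s : Finset I → ℝ)
    (hdinc : ∀ ε : ℝ, 0 < ε → ∀ K : Finset I, ∃ δ : ℝ, 0 < δ ∧ ∀ L : Finset I,
      EMetric.hausdorffEdist (L : Set I) (Set.univ : Set I) < ENNReal.ofReal δ →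
      s K - ε < s L) :
    (BddAbove (Set.range s) → ExtEq s (sSup (Set.range s))) ∧
    (¬ BddAbove (Set.range s) → ∀ l : ℝ, ∃ δ : ℝ, 0 < δ ∧ ∀ L : Finset I,
      EMetric.hausdorffEdist (L : Set I) (Set.univ : Set I) < ENNReal.ofReal δ →
      l < s L) := by
  refine ⟨fun hb ε hε => ?_, fun hb l => ?_⟩
  · -- A finite set whose value is within `ε / 2` of the supremum.
    obtain ⟨_, ⟨K, rfl⟩, hK⟩ :=
      exists_lt_of_lt_csSup (Set.range_nonempty s)
        (show sSup (Set.range s) - ε / 2 < sSup (Set.range s) by linarith)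
    obtain ⟨δ, hδ, h⟩ := hdinc (ε / 2) (half_pos hε) K
    refine ⟨δ, hδ, fun L hL => ?_⟩
    have hlow := h L hL
    have hup : s L ≤ sSup (Set.range s) := le_csSup hb ⟨L, rfl⟩
    rw [abs_lt]
    constructor <;> linarith
  · obtain ⟨_, ⟨K, rfl⟩, hK⟩ := not_bddAbove_iff.1 hb (l + 1)
    obtain ⟨δ, hδ, h⟩ := hdinc 1 one_pos K
    refine ⟨δ, hδ, fun L hL => ?_⟩
    have hlow := h L hL
    linarith
end

section
/- Let (X,μ) be a measure space with μ(X) < ∞, and let f : X → ℝ be measurable with 0 ≤ f < M for some real M > 0. Let I = (0,M) ⊆ ℝ with the usual metric, and for finite H ⊆ I, writing H = {a_1, …, a_n} with a_1 < ⋯ < a_n and setting a_0 = 0, a_{n+1} = M, define s(H) = Σ_{i=0}^{n} a_i · μ(f⁻¹([a_i, a_{i+1}))). Then ext(s,I) exists and equals ∫_X f dμ. -/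
/-!
If consecutive division points `a_i < a_{i+1}` differ by at most `η`, then on `f⁻¹([a_i, a_{i+1}))`
the function `f` lies between `a_i` and `a_i + η`, so the sum over a division of `[0, M)` is below
`∫ f dμ` by at most `η · μ(X)` (`layerSum_bounds`). A finite `K ⊆ (0, M)` at Hausdorff distance
less than `δ` from `(0, M)` has gaps of length at most `2δ`: the midpoint of a gap lies in `(0, M)`
and is `δ`-close to some point of `K`, which cannot lie inside the gap (`isChain_sub_le`).
Hence `δ = ε / (2 (μ(X) + 1))` works.
-/

open MeasureTheory

/-- Given the increasingly sorted list `[a₀, a₁, …, a_{n+1}]` (with `a₀ = 0` and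
`a_{n+1} = M` prepended/appended), returns `Σ_{i=0}^{n} a_i · μ(f⁻¹([a_i, a_{i+1})))`. -/
noncomputable def layerSum {X : Type*} [MeasurableSpace X] (μ : Measure X)
    (f : X → ℝ) : List ℝ → ℝ
  | x :: y :: l => x * (μ (f ⁻¹' Set.Ico x y)).toReal + layerSum μ f (y :: l)
  | _ => 0

/-- The layer sum over a division of `[x, z)` with gaps at most `η` underestimates the integral
of `f` over `f⁻¹([x, z))` by at most `η · μ(f⁻¹([x, z)))`. -/
theorem layerSum_bounds {X : Type*} [MeasurableSpace X] (μ : Measure X) [IsFiniteMeasure μ]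
    {f : X → ℝ} (hmeas : Measurable f) (hint : Integrable f μ) (η : ℝ) (l : List ℝ) :
    ∀ x z : ℝ, (x :: l).Pairwise (· < ·) → (x :: l).IsChain (fun a b => b - a ≤ η) →
      (x :: l).getLast (by simp) = z →
      layerSum μ f (x :: l) ≤ ∫ w in f ⁻¹' Set.Ico x z, f w ∂μ ∧
      ∫ w in f ⁻¹' Set.Ico x z, f w ∂μ ≤
        layerSum μ f (x :: l) + η * μ.real (f ⁻¹' Set.Ico x z) := by
  induction l with
  | nil =>
    intro x z _ _ hz
    simp only [List.getLast_singleton] at hz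
    subst hz
    simp [layerSum]
  | cons y l ih =>
    intro x z hp hc hz
    rw [List.getLast_cons (by simp)] at hz
    have hpy := (List.pairwise_cons.1 hp).2
    rw [List.isChain_cons_cons] at hc
    obtain ⟨h1, h2⟩ := ih y z hpy hc.2 hz
    have hxy : x < y := (List.pairwise_cons.1 hp).1 y (by simp)
    have hyz : y ≤ z := by
      have hm : z ∈ y :: l := hz ▸ List.getLast_mem _
      rcases List.mem_cons.1 hm with h | h
      · exact h.ge
      · exact ((List.pairwise_cons.1 hpy).1 z h).le
    have hU : f ⁻¹' Set.Ico x z = f ⁻¹' Set.Ico x y ∪ f ⁻¹' Set.Ico y z := by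
      rw [← Set.preimage_union, Set.Ico_union_Ico_eq_Ico hxy.le hyz]
    have hD : Disjoint (f ⁻¹' Set.Ico x y) (f ⁻¹' Set.Ico y z) :=
      Disjoint.preimage f (Set.Ico_disjoint_Ico_same)
    have hmA : MeasurableSet (f ⁻¹' Set.Ico x y) := hmeas measurableSet_Ico
    have hmB : MeasurableSet (f ⁻¹' Set.Ico y z) := hmeas measurableSet_Ico
    rw [hU, setIntegral_union hD hmB hint.integrableOn hint.integrableOn,
      measureReal_union hD hmB]
    have hlow : x * μ.real (f ⁻¹' Set.Ico x y) ≤ ∫ w in f ⁻¹' Set.Ico x y, f w ∂μ := by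
      have := setIntegral_mono_on (μ := μ) (f := fun _ => x) (integrableOn_const (by simp))
        hint.integrableOn hmA (fun w hw => hw.1)
      simpa [mul_comm] using this
    have hup : ∫ w in f ⁻¹' Set.Ico x y, f w ∂μ ≤ (x + η) * μ.real (f ⁻¹' Set.Ico x y) := by
      have := setIntegral_mono_on (μ := μ) (g := fun _ => x + η) hint.integrableOn
        (integrableOn_const (by simp)) hmA (fun w hw => by
          have := hw.2
          linarith [hc.1])
      simpa [mul_comm] using this
    have hdef : layerSum μ f (x :: y :: l) =
      x * μ.real (f ⁻¹' Set.Ico x y) + layerSum μ f (y :: l) := rfl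
    rw [hdef]
    constructor
    · linarith
    · linarith

/-- If every point of `(0, M)` is `δ`-close to a member of a sorted list `L ⊆ [0, M]`, then
consecutive members of `L` differ by at most `2δ`. -/
theorem isChain_sub_le {M δ : ℝ} {L : List ℝ} (hL : L.Pairwise (· < ·))
    (h0 : ∀ a ∈ L, 0 ≤ a ∧ a ≤ M)
    (hd : ∀ t : ℝ, 0 < t → t < M → ∃ h ∈ L, |t - h| < δ) :
    L.IsChain (fun a b => b - a ≤ 2 * δ) := by
  rw [List.isChain_iff_getElem]
  intro i hi
  have hlt : L[i] < L[i + 1] := List.pairwise_iff_getElem.1 hL i (i + 1) _ _ (by omega)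
  have ha := h0 L[i] (List.getElem_mem _)
  have hb := h0 L[i + 1] (List.getElem_mem _)
  obtain ⟨h, hh, hlt'⟩ := hd ((L[i] + L[i + 1]) / 2) (by linarith) (by linarith)
  obtain ⟨j, hj, rfl⟩ := List.getElem_of_mem hh
  rw [abs_lt] at hlt'
  rcases Nat.lt_or_ge i j with hij | hij
  · have : L[i + 1] ≤ L[j] := by
      rcases (show i + 1 ≤ j from hij).eq_or_lt with e | e
      · subst e; exact le_rfl
      · exact (List.pairwise_iff_getElem.1 hL (i + 1) j _ _ e).le
    linarith
  · have : L[j] ≤ L[i] := by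
      rcases hij.eq_or_lt with e | e
      · subst e; exact le_rfl
      · exact (List.pairwise_iff_getElem.1 hL j i _ _ e).le
    linarith

/-- for a finite measure space `(X,μ)` and measurable `f` with
`0 ≤ f < M`, taking `I = (0,M)` and
`s(H) = Σ_{i=0}^{n} a_i · μ(f⁻¹([a_i, a_{i+1})))` for `H = {a₁ < ⋯ < aₙ}`,
`a₀ = 0`, `a_{n+1} = M`, the extension `ext(s,I)` exists and equals `∫_X f dμ`. -/
theorem stmt_19 {X : Type*} [MeasurableSpace X] (μ : Measure X)
    (hfin : μ Set.univ < ⊤) (f : X → ℝ) (hmeas : Measurable f)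
    (M : ℝ) (hM : 0 < M) (hf0 : ∀ x, 0 ≤ f x) (hfM : ∀ x, f x < M) :
    ExtEq (fun H : Finset ↥(Set.Ioo (0 : ℝ) M) =>
        layerSum μ f ((0 : ℝ) :: (((H.image Subtype.val).sort (· ≤ ·)) ++ [M])))
      (∫ x, f x ∂μ) := by
  intro ε hε
  have : IsFiniteMeasure μ := ⟨hfin⟩
  have hm0 : 0 ≤ μ.real Set.univ := measureReal_nonneg
  have hint : Integrable f μ :=
    Integrable.of_bound hmeas.aestronglyMeasurable M (Filter.Eventually.of_forall fun x => by
      rw [Real.norm_eq_abs, abs_of_nonneg (hf0 x)]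
      exact (hfM x).le)
  refine ⟨ε / (2 * (μ.real Set.univ + 1)), by positivity, fun K hK => ?_⟩
  set δ := ε / (2 * (μ.real Set.univ + 1)) with hδ
  set S := (K.image Subtype.val).sort (· ≤ ·) with hS
  have hSmem : ∀ a ∈ S, 0 < a ∧ a < M := by
    intro a ha
    rw [hS, Finset.mem_sort, Finset.mem_image] at ha
    obtain ⟨b, _, rfl⟩ := ha
    exact b.2
  have hSp : S.Pairwise (· < ·) := (Finset.sortedLT_sort _).pairwise
  have hp : ((0 : ℝ) :: (S ++ [M])).Pairwise (· < ·) := by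
    rw [List.pairwise_cons, List.pairwise_append]
    refine ⟨fun a ha => ?_, hSp, List.pairwise_singleton _ _, fun a ha b hb => ?_⟩
    · rcases List.mem_append.1 ha with h | h
      · exact (hSmem a h).1
      · rwa [List.mem_singleton.1 h]
    · rw [List.mem_singleton.1 hb]
      exact (hSmem a ha).2
  have hb : ∀ a ∈ (0 : ℝ) :: (S ++ [M]), 0 ≤ a ∧ a ≤ M := by
    intro a ha
    rcases List.mem_cons.1 ha with h | h
    · rw [h]; exact ⟨le_rfl, hM.le⟩
    · rcases List.mem_append.1 h with h | h
      · exact ⟨(hSmem a h).1.le, (hSmem a h).2.le⟩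
      · rw [List.mem_singleton.1 h]; exact ⟨hM.le, le_rfl⟩
  have hc : ((0 : ℝ) :: (S ++ [M])).IsChain (fun a b => b - a ≤ 2 * δ) := by
    refine isChain_sub_le hp hb fun t ht0 htM => ?_
    replace hK : Metric.hausdorffEDist (Set.univ : Set (Set.Ioo (0 : ℝ) M)) (K : Set _)
        < ENNReal.ofReal δ := Metric.hausdorffEDist_comm.trans_lt hK
    obtain ⟨h, hh, hd⟩ := Metric.exists_edist_lt_of_hausdorffEDist_lt
      (Set.mem_univ (⟨t, ht0, htM⟩ : Set.Ioo (0 : ℝ) M)) hK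
    refine ⟨h, ?_, ?_⟩
    · have : (h : ℝ) ∈ S := by
        rw [hS, Finset.mem_sort]
        exact Finset.mem_image_of_mem _ hh
      simp [this]
    · rw [edist_dist] at hd
      exact (ENNReal.ofReal_lt_ofReal_iff (by positivity)).1 hd
  obtain ⟨h1, h2⟩ := layerSum_bounds μ hmeas hint (2 * δ) (S ++ [M]) 0 M hp hc (by simp)
  have huniv : f ⁻¹' Set.Ico 0 M = Set.univ := Set.eq_univ_of_forall fun x => ⟨hf0 x, hfM x⟩
  rw [huniv, setIntegral_univ] at h1 h2
  have hlt : 2 * δ * μ.real Set.univ < ε := by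
    have : 2 * δ * (μ.real Set.univ + 1) = ε := by rw [hδ]; field_simp
    have : 0 < δ := by positivity
    linarith
  change |layerSum μ f (0 :: (S ++ [M])) - _| < ε
  rw [abs_lt]
  constructor <;> linarith
end
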